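/- In the lemniscatic case k = 1/√2, for every n ∈ ℕ there exist integers a and b with I_{2n}^+ = a and a ≡ 2^n (mod 10), and I_{2n}^− = b and b ≡ 6·2^n (mod 10). -/

import Mathlib

/-!
The moments are Taylor coefficients of elliptic functions with square period lattice.

Put `K = K' = K(1/√2)` and let `φ = sn dn / cn`, which satisfies `φ'² = 1 + φ⁴`, `φ'' = 2φ³`,
`φ(0) = 0`, `φ'(0) = 1` and tends to infinity at `K`. Then `I_{2n}^+ = φ^{(4n+1)}(0)` and
`I_{2n}^- = -2 (φ²)^{(4n+2)}(0)`. By the differential equations the second derivative of `q(φ)` is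
`(T q)(φ)` with `T q = (1 + X⁴) q'' + 2X³ q'`, so both are integers, namely multiples of a
coefficient of an iterate of `T`. Modulo `10` the operator `T²` preserves small spaces of
polynomials: `X ↦ 2X + 4X⁵`, `X⁵ ↦ 0` and `X² ↦ 2X²`. This yields the two congruences.

For the analytic part, the substitution `x = (t/K)²` turns the integrals into
`∫₀^∞ t^(r-1) / (cosh t - ε cos t) dt` with `ε = ±1` and `ε = i^r`. Expanding the kernel as a double
geometric series gives the sum of `ε^(a+b) (1 + a(1+i) + b(1-i))^(-r)` over `a, b ≥ 0`.
Multiplication by `i` permutes four such quadrants, so this is a quarter of a sum over all of `ℤ²`,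
hence a Taylor coefficient at `0` of `℘(x - 1) + ε ℘(x - i)` for the lattice `2ℤ[i]`. On the real
line, uniqueness for `f'' = 6f² - g₂/2` and a comparison of poles show
`℘(x - 1) + ℘(x - i) = K² φ(Kx)²` and `℘(x - 1) - ℘(x - i) = K² φ'(Kx)`.

For `I_0^+` one has `r = 2` and the double sum is not absolutely convergent. There the generating
function `∫₀^∞ t (cosh tx + cos tx) / (cosh t + cos t) dt` of the moments agrees with
`℘(x - 1) - ℘(x - i)` up to a constant, and both are `1/(1-x)² + o(1)` as `x` increases to `1`, so
the constant is `0`.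
-/

open MeasureTheory Real

/-- The complete elliptic integral of the first kind `K(k)`. -/
noncomputable def ellipticK (k : ℝ) : ℝ :=
  ∫ θ in (0 : ℝ)..(π / 2), (1 - k ^ 2 * Real.sin θ ^ 2) ^ (-(1 / 2) : ℝ)

/-- Kuznetsov's moment integral `I_n^+`, realizing
`(1/2)∫_ℝ x^n dx/(cos(√x K) + cosh(√x K'))` with `√x = i√(−x)` for `x < 0`. -/
noncomputable def Iplus (k : ℝ) (n : ℕ) : ℝ :=
  (1 / 2) * (∫ x in Set.Ioi (0 : ℝ), x ^ n /
      (Real.cos (ellipticK k * Real.sqrt x) +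
        Real.cosh (ellipticK (Real.sqrt (1 - k ^ 2)) * Real.sqrt x)))
  + ((-1 : ℝ) ^ n / 2) * (∫ x in Set.Ioi (0 : ℝ), x ^ n /
      (Real.cosh (ellipticK k * Real.sqrt x) +
        Real.cos (ellipticK (Real.sqrt (1 - k ^ 2)) * Real.sqrt x)))

/-- Kuznetsov's moment integral `I_n^−`, realizing
`∫_ℝ x^{n+1} dx/(cos(√x K) − cosh(√x K'))` with `√x = i√(−x)` for `x < 0`. -/
noncomputable def Iminus (k : ℝ) (n : ℕ) : ℝ :=
  (∫ x in Set.Ioi (0 : ℝ), x ^ (n + 1) /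
      (Real.cos (ellipticK k * Real.sqrt x) -
        Real.cosh (ellipticK (Real.sqrt (1 - k ^ 2)) * Real.sqrt x)))
  + (-1 : ℝ) ^ (n + 1) * (∫ x in Set.Ioi (0 : ℝ), x ^ (n + 1) /
      (Real.cosh (ellipticK k * Real.sqrt x) -
        Real.cos (ellipticK (Real.sqrt (1 - k ^ 2)) * Real.sqrt x)))

/-! ### Polynomials in a solution of `y'² = c² (1 + y⁴)` -/

open Set Filter Topology

section LemniscateOperator

open Polynomial

variable {R S : Type*} [CommRing R] [CommRing S]

/-- The second derivative on polynomials in a lemniscatic function: if `y'² = 1 + y⁴` and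
`y'' = 2 y³`, then `(q(y))'' = (lemniscateOp R q)(y)`. -/
noncomputable def lemniscateOp (R : Type*) [CommRing R] : Module.End R R[X] :=
  LinearMap.mulLeft R (1 + X ^ 4) ∘ₗ derivative ∘ₗ derivative +
    LinearMap.mulLeft R (2 * X ^ 3) ∘ₗ derivative

lemma lemniscateOp_apply (q : R[X]) :
    lemniscateOp R q = (1 + X ^ 4) * derivative (derivative q) + 2 * X ^ 3 * derivative q := rfl

lemma map_lemniscateOp_pow_apply (f : R →+* S) (n : ℕ) (q : R[X]) :
    ((lemniscateOp R ^ n) q).map f = (lemniscateOp S ^ n) (q.map f) := by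
  induction n with
  | zero => rfl
  | succ n ih =>
    simp only [pow_succ', Module.End.mul_apply, ← ih, lemniscateOp_apply, Polynomial.map_add,
      Polynomial.map_mul, Polynomial.map_pow, Polynomial.map_one, Polynomial.map_ofNat,
      map_X, derivative_map]

lemma lemniscateOp_sq_X : (lemniscateOp R ^ 2) (X : R[X]) = 12 * X + 24 * X ^ 5 := by
  simp only [sq, Module.End.mul_apply, lemniscateOp_apply, derivative_X, derivative_one, mul_zero,
    mul_one, zero_add, derivative_X_pow_succ, Nat.cast_ofNat, map_add, map_ofNat, map_one,
    derivative_mul, derivative_ofNat, add_zero, zero_mul, one_mul]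
  ring

lemma lemniscateOp_sq_X_pow_five :
    (lemniscateOp R ^ 2) (X ^ 5 : R[X]) = 120 * X + 1500 * X ^ 5 + 1680 * X ^ 9 := by
  simp only [sq, Module.End.mul_apply, lemniscateOp_apply, derivative_X, derivative_one, mul_one,
    zero_add, derivative_X_pow_succ, Nat.cast_ofNat, map_add, map_ofNat, map_one, derivative_mul,
    derivative_ofNat, add_zero, zero_mul, one_mul]
  ring

lemma lemniscateOp_sq_X_sq : (lemniscateOp R ^ 2) (X ^ 2 : R[X]) = 72 * X ^ 2 + 120 * X ^ 6 := by
  simp only [sq, Module.End.mul_apply, lemniscateOp_apply, derivative_X, derivative_one, mul_zero,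
    mul_one, zero_add, derivative_X_pow_succ, Nat.cast_ofNat, map_add, map_ofNat, map_one,
    derivative_mul, derivative_ofNat, add_zero, zero_mul, one_mul]
  ring

lemma ten_eq_zero_polynomial_zmod_ten : (10 : (ZMod 10)[X]) = 0 := by
  rw [← map_ofNat C, (by decide : (OfNat.ofNat 10 : ZMod 10) = 0), C_0]

lemma exists_lemniscateOp_pow_X (n : ℕ) :
    ∃ c : ZMod 10, (lemniscateOp (ZMod 10) ^ (2 * n)) X = (2 ^ n : ZMod 10) • X + c • X ^ 5 := by
  induction n with
  | zero => exact ⟨0, by simp⟩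
  | succ n ih =>
    obtain ⟨c, hc⟩ := ih
    refine ⟨2 ^ n * 4, ?_⟩
    have h10 := ten_eq_zero_polynomial_zmod_ten
    rw [show 2 * (n + 1) = 2 + 2 * n by ring, pow_add, Module.End.mul_apply, hc, map_add,
      map_smul, map_smul, lemniscateOp_sq_X, lemniscateOp_sq_X_pow_five]
    simp only [smul_eq_C_mul, C_mul, C_pow, map_ofNat]
    linear_combination (2 ^ n * (X + 2 * X ^ 5) + C c * (12 * X + 150 * X ^ 5 + 168 * X ^ 9)) * h10

lemma lemniscateOp_pow_X_sq (n : ℕ) :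
    (lemniscateOp (ZMod 10) ^ (2 * n)) (X ^ 2) = (2 ^ n : ZMod 10) • X ^ 2 := by
  induction n with
  | zero => simp
  | succ n ih =>
    have h10 := ten_eq_zero_polynomial_zmod_ten
    rw [show 2 * (n + 1) = 2 + 2 * n by ring, pow_add, Module.End.mul_apply, ih, map_smul,
      lemniscateOp_sq_X_sq]
    simp only [smul_eq_C_mul, C_pow, map_ofNat]
    linear_combination (2 ^ n * (7 * X ^ 2 + 12 * X ^ 6)) * h10

lemma coeff_one_lemniscateOp_pow_X (n : ℕ) :
    ((lemniscateOp ℤ ^ (2 * n)) X).coeff 1 ≡ 2 ^ n [ZMOD 10] := by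
  obtain ⟨c, hc⟩ := exists_lemniscateOp_pow_X n
  refine (ZMod.intCast_eq_intCast_iff _ _ 10).mp ?_
  have h := map_lemniscateOp_pow_apply (Int.castRingHom (ZMod 10)) (2 * n) X
  rw [map_X, hc] at h
  simpa [coeff_X_pow] using congrArg (coeff · 1) h

lemma coeff_zero_lemniscateOp_pow_X_sq (n : ℕ) :
    -2 * ((lemniscateOp ℤ ^ (2 * n + 1)) (X ^ 2)).coeff 0 ≡ 6 * 2 ^ n [ZMOD 10] := by
  refine (ZMod.intCast_eq_intCast_iff _ _ 10).mp ?_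
  have h := map_lemniscateOp_pow_apply (Int.castRingHom (ZMod 10)) (2 * n + 1) (X ^ 2)
  rw [Polynomial.map_pow, map_X, pow_succ' (lemniscateOp (ZMod 10)), Module.End.mul_apply,
    lemniscateOp_pow_X_sq, map_smul, lemniscateOp_apply] at h
  have h0 : ((((lemniscateOp ℤ ^ (2 * n + 1)) (X ^ 2)).coeff 0 : ℤ) : ZMod 10) =
      2 ^ n * (1 + 1) := by
    simpa [derivative_mul, derivative_X_pow] using congrArg (coeff · 0) h
  have h10 : (10 : ZMod 10) = 0 := by decide
  push_cast
  rw [h0]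
  linear_combination -2 ^ n * h10

end LemniscateOperator

section IteratedDeriv

variable {𝕜 E : Type*} [NontriviallyNormedField 𝕜] [NormedAddCommGroup E] [NormedSpace 𝕜 E]

lemma eqOn_iteratedDeriv_of_hasDerivAt {F : ℕ → 𝕜 → E} {s : Set 𝕜} (hs : IsOpen s)
    (hF : ∀ n, ∀ x ∈ s, HasDerivAt (F n) (F (n + 1) x) x) (n : ℕ) :
    EqOn (iteratedDeriv n (F 0)) (F n) s := by
  induction n with
  | zero => exact fun x _ => by rw [iteratedDeriv_zero]
  | succ n ih =>
    intro x hx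
    rw [iteratedDeriv_succ, (ih.eventuallyEq_of_mem (hs.mem_nhds hx)).deriv_eq,
      (hF n x hx).deriv]

lemma eqOn_iteratedDeriv_comp_ofReal {f : ℂ → ℂ} {s : Set ℝ} (hs : IsOpen s)
    (hf : ∀ x ∈ s, AnalyticAt ℂ f x) (n : ℕ) :
    EqOn (iteratedDeriv n fun x : ℝ => f x) (fun x : ℝ => iteratedDeriv n f x) s := by
  refine eqOn_iteratedDeriv_of_hasDerivAt (F := fun n (x : ℝ) => iteratedDeriv n f x) hs
    (fun n x hx => ?_) n
  have h : AnalyticAt ℂ (iteratedDeriv n f) x := by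
    rw [iteratedDeriv_eq_iterate]
    exact (hf x hx).iterated_deriv n
  rw [iteratedDeriv_succ]
  exact h.differentiableAt.hasDerivAt.comp_ofReal

open Polynomial

variable {A R : Type*} [NontriviallyNormedField A] [NormedAlgebra 𝕜 A] [CommRing R] [Algebra R A]
  {y w : 𝕜 → A} {a : A} {s : Set 𝕜}

/-- The successive derivatives of `x ↦ q (y x)`, where `y' = w` and `w² = a (1 + y⁴)`. -/
noncomputable def lemniscateDeriv (y w : 𝕜 → A) (a : A) (q : R[X]) (n : ℕ) (x : 𝕜) : A :=
  a ^ (n / 2) *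
    (w x ^ (n % 2) * aeval (y x) (derivative^[n % 2] ((lemniscateOp R ^ (n / 2)) q)))

lemma hasDerivAt_lemniscateDeriv {x : 𝕜} (hy : HasDerivAt y (w x) x)
    (hw : HasDerivAt w (a * (2 * y x ^ 3)) x) (hwy : w x ^ 2 = a * (1 + y x ^ 4))
    (q : R[X]) (n : ℕ) :
    HasDerivAt (lemniscateDeriv y w a q n) (lemniscateDeriv y w a q (n + 1) x) x := by
  have hp (p : R[X]) : HasDerivAt (fun x => aeval (y x) p) (aeval (y x) (derivative p) * w x) x :=
    HasDerivAt.comp (h₂ := fun z => aeval z p) x (p.hasDerivAt_aeval (y x)) hy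
  unfold lemniscateDeriv
  obtain ⟨k, rfl | rfl⟩ := n.even_or_odd'
  · have h2 : (2 * k + 1) / 2 = k := by omega
    simp only [Nat.mul_mod_right, Nat.mul_add_mod, Nat.one_mod, h2, pow_zero, one_mul, pow_one,
      Function.iterate_zero, id, Function.iterate_one, Nat.mul_div_cancel_left k two_pos]
    exact ((hp _).const_mul (a ^ k)).congr_deriv (by ring)
  · have h1 : (2 * k + 1) / 2 = k := by omega
    have h2 : (2 * k + 1 + 1) / 2 = k + 1 := by omega
    have h3 : (2 * k + 1 + 1) % 2 = 0 := by omega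
    simp only [Nat.mul_add_mod, Nat.one_mod, h1, h2, h3, pow_zero, one_mul, pow_one,
      Function.iterate_zero, id, Function.iterate_one]
    refine ((hw.mul (hp _)).const_mul (a ^ k)).congr_deriv ?_
    rw [pow_succ' (lemniscateOp R) k, Module.End.mul_apply, lemniscateOp_apply]
    simp only [map_add, map_mul, map_pow, aeval_X, map_one, map_ofNat]
    linear_combination a ^ k *
      aeval (y x) (derivative (derivative ((lemniscateOp R ^ k) q))) * hwy

lemma iteratedDeriv_two_mul_aeval (hs : IsOpen s) (hy : ∀ x ∈ s, HasDerivAt y (w x) x)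
    (hw : ∀ x ∈ s, HasDerivAt w (a * (2 * y x ^ 3)) x)
    (hwy : ∀ x ∈ s, w x ^ 2 = a * (1 + y x ^ 4)) (q : R[X]) (n : ℕ) {x : 𝕜} (hx : x ∈ s) :
    iteratedDeriv (2 * n) (fun x => aeval (y x) q) x =
      a ^ n * aeval (y x) ((lemniscateOp R ^ n) q) := by
  have h := eqOn_iteratedDeriv_of_hasDerivAt (F := lemniscateDeriv y w a q) hs (fun n x hx =>
    hasDerivAt_lemniscateDeriv (hy x hx) (hw x hx) (hwy x hx) q n) (2 * n) hx
  have h0 : lemniscateDeriv y w a q 0 = fun x => aeval (y x) q := by ext; simp [lemniscateDeriv]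
  rw [← h0, h]
  simp [lemniscateDeriv]

lemma iteratedDeriv_two_mul_mul_aeval_derivative (hs : IsOpen s)
    (hy : ∀ x ∈ s, HasDerivAt y (w x) x) (hw : ∀ x ∈ s, HasDerivAt w (a * (2 * y x ^ 3)) x)
    (hwy : ∀ x ∈ s, w x ^ 2 = a * (1 + y x ^ 4)) (q : R[X]) (n : ℕ) {x : 𝕜} (hx : x ∈ s) :
    iteratedDeriv (2 * n) (fun x => w x * aeval (y x) (derivative q)) x =
      a ^ n * (w x * aeval (y x) (derivative ((lemniscateOp R ^ n) q))) := by
  have h := eqOn_iteratedDeriv_of_hasDerivAt (F := fun n => lemniscateDeriv y w a q (n + 1)) hs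
    (fun n x hx => hasDerivAt_lemniscateDeriv (hy x hx) (hw x hx) (hwy x hx) q (n + 1)) (2 * n) hx
  have h2 : (2 * n + 1) / 2 = n := by omega
  have h1 : lemniscateDeriv y w a q 1 = fun x => w x * aeval (y x) (derivative q) := by
    ext; simp [lemniscateDeriv]
  rw [← h1, h]
  simp [lemniscateDeriv, h2]

end IteratedDeriv

/-! ### Uniqueness for differential equations and blow-up -/

section ODE

lemma eqOn_of_hasDerivAt_of_contDiff {E : Type*} [NormedAddCommGroup E] [NormedSpace ℝ E]
    {v : E → E} (hv : ContDiff ℝ 1 v) {f g : ℝ → E} {s : Set ℝ} {t₀ : ℝ} (hs : IsOpen s)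
    (hs' : IsPreconnected s) (hf : ∀ t ∈ s, HasDerivAt f (v (f t)) t)
    (hg : ∀ t ∈ s, HasDerivAt g (v (g t)) t) (ht₀ : t₀ ∈ s) (h₀ : f t₀ = g t₀) : EqOn f g s := by
  suffices s ⊆ {t | f =ᶠ[𝓝 t] g} from fun t ht => (this ht).eq_of_nhds
  have of_eq {t} (ht : t ∈ s) (h : f t = g t) : f =ᶠ[𝓝 t] g := by
    obtain ⟨K, u, hu, hK⟩ := hv.contDiffAt.exists_lipschitzOnWith (x := f t)
    refine ODE_solution_unique_of_eventually (v := fun _ => v) (s := fun _ => u)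
      (.of_forall fun _ => hK) ?_ ?_ h
    · filter_upwards [hs.mem_nhds ht, (hf t ht).continuousAt hu] with x hx hxu using ⟨hf x hx, hxu⟩
    · filter_upwards [hs.mem_nhds ht, (hg t ht).continuousAt (h ▸ hu)] with x hx hxu
        using ⟨hg x hx, hxu⟩
  refine hs'.subset_of_closure_inter_subset isOpen_setOfPred_eventually_nhds
    ⟨t₀, ht₀, of_eq ht₀ h₀⟩ ?_
  rintro t ⟨htc, ht⟩
  refine of_eq ht (tendsto_nhds_unique_of_frequently_eq (hf t ht).continuousAt
    (hg t ht).continuousAt ?_)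
  exact (mem_closure_iff_frequently.mp htc).mono fun x hx => hx.eq_of_nhds

lemma eqOn_of_hasDerivAt_second_order {E : Type*} [NormedAddCommGroup E] [NormedSpace ℝ E]
    {P : E → E} (hP : ContDiff ℝ 1 P) {f f' g g' : ℝ → E} {s : Set ℝ} {t₀ : ℝ} (hs : IsOpen s)
    (hs' : IsPreconnected s) (hf : ∀ t ∈ s, HasDerivAt f (f' t) t)
    (hf' : ∀ t ∈ s, HasDerivAt f' (P (f t)) t) (hg : ∀ t ∈ s, HasDerivAt g (g' t) t)
    (hg' : ∀ t ∈ s, HasDerivAt g' (P (g t)) t) (ht₀ : t₀ ∈ s) (h₀ : f t₀ = g t₀)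
    (h₀' : f' t₀ = g' t₀) : EqOn f g s := by
  have hv : ContDiff ℝ 1 fun p : E × E => (p.2, P p.1) := contDiff_snd.prodMk (hP.comp contDiff_fst)
  have h := eqOn_of_hasDerivAt_of_contDiff hv hs hs'
    (f := fun t => (f t, f' t)) (g := fun t => (g t, g' t))
    (fun t ht => (hf t ht).prodMk (hf' t ht)) (fun t ht => (hg t ht).prodMk (hg' t ht)) ht₀
    (Prod.ext h₀ h₀')
  exact fun t ht => congrArg Prod.fst (h ht)

lemma not_tendsto_norm_atTop_of_continuousAt {E : Type*} [NormedAddCommGroup E] {f g : ℝ → E}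
    {a : ℝ} (hfg : f =ᶠ[𝓝[<] a] g) (hg : ContinuousAt g a) :
    ¬ Tendsto (fun x => ‖f x‖) (𝓝[<] a) atTop := fun h =>
  not_tendsto_nhds_of_tendsto_atTop h _
    ((hg.norm.tendsto.mono_left nhdsWithin_le_nhds).congr' (hfg.symm.fun_comp norm))

lemma le_of_tendsto_norm_atTop_of_eqOn {E : Type*} [NormedAddCommGroup E] {f g : ℝ → E}
    {a b c : ℝ} (hb : a < b) (hfg : EqOn f g (Ioo a (min b c)))
    (hg : ∀ x ∈ Ioo a c, ContinuousAt g x) (hf' : Tendsto (fun x => ‖f x‖) (𝓝[<] b) atTop) :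
    c ≤ b := by
  by_contra! hbc
  rw [min_eq_left hbc.le] at hfg
  exact not_tendsto_norm_atTop_of_continuousAt
    (eventually_of_mem (Ioo_mem_nhdsLT hb) hfg) (hg b ⟨hb, hbc⟩) hf'

lemma eq_of_tendsto_norm_atTop_of_eqOn {E : Type*} [NormedAddCommGroup E] {f g : ℝ → E}
    {a b c : ℝ} (hb : a < b) (hc : a < c) (hfg : EqOn f g (Ioo a (min b c)))
    (hf : ∀ x ∈ Ioo a b, ContinuousAt f x) (hg : ∀ x ∈ Ioo a c, ContinuousAt g x)
    (hf' : Tendsto (fun x => ‖f x‖) (𝓝[<] b) atTop)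
    (hg' : Tendsto (fun x => ‖g x‖) (𝓝[<] c) atTop) : b = c :=
  le_antisymm (le_of_tendsto_norm_atTop_of_eqOn hc (min_comm b c ▸ hfg.symm) hf hg')
    (le_of_tendsto_norm_atTop_of_eqOn hb hfg hg hf')

end ODE

/-! ### Jacobi elliptic functions on the real line -/

section Jacobi

variable {k : ℝ}

/-- Legendre's `Δ(θ) = √(1 - k² sin² θ)`, which is `dn` as a function of the amplitude. -/
noncomputable def legendreDelta (k θ : ℝ) : ℝ := √(1 - k ^ 2 * sin θ ^ 2)

/-- The incomplete elliptic integral of the first kind `F(θ, k)`. -/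
noncomputable def ellipticF (k θ : ℝ) : ℝ := ∫ t in (0 : ℝ)..θ, (legendreDelta k t)⁻¹

/-- The Jacobi amplitude, the inverse function of `ellipticF k`. It is meaningful for `k² < 1`. -/
noncomputable def jacobiAm (k : ℝ) : ℝ → ℝ := Function.invFun (ellipticF k)

/-- The Jacobi elliptic function `sn`. -/
noncomputable def jacobiSn (k u : ℝ) : ℝ := sin (jacobiAm k u)

/-- The Jacobi elliptic function `cn`. -/
noncomputable def jacobiCn (k u : ℝ) : ℝ := cos (jacobiAm k u)

/-- The Jacobi elliptic function `dn`. -/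
noncomputable def jacobiDn (k u : ℝ) : ℝ := legendreDelta k (jacobiAm k u)

lemma legendreDelta_radicand_pos (hk : k ^ 2 < 1) (θ : ℝ) : 0 < 1 - k ^ 2 * sin θ ^ 2 := by
  nlinarith [sin_sq_le_one θ, sq_nonneg k]

lemma legendreDelta_pos (hk : k ^ 2 < 1) (θ : ℝ) : 0 < legendreDelta k θ :=
  sqrt_pos.mpr (legendreDelta_radicand_pos hk θ)

lemma legendreDelta_sq (hk : k ^ 2 < 1) (θ : ℝ) :
    legendreDelta k θ ^ 2 = 1 - k ^ 2 * sin θ ^ 2 :=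
  sq_sqrt (legendreDelta_radicand_pos hk θ).le

lemma legendreDelta_le_one (k θ : ℝ) : legendreDelta k θ ≤ 1 :=
  sqrt_le_one.mpr (by nlinarith [mul_nonneg (sq_nonneg k) (sq_nonneg (sin θ))])

lemma hasDerivAt_legendreDelta (hk : k ^ 2 < 1) (θ : ℝ) :
    HasDerivAt (legendreDelta k) (-(k ^ 2 * sin θ * cos θ) / legendreDelta k θ) θ := by
  have h := ((((hasDerivAt_sin θ).pow 2).const_mul (k ^ 2)).const_sub 1).sqrt
    (legendreDelta_radicand_pos hk θ).ne'
  refine h.congr_deriv ?_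
  have := (legendreDelta_pos hk θ).ne'
  simp only [Pi.pow_apply, legendreDelta, Nat.cast_ofNat, Nat.add_one_sub_one, pow_one] at this ⊢
  field_simp

lemma continuous_legendreDelta (k : ℝ) : Continuous (legendreDelta k) := by
  unfold legendreDelta
  fun_prop

lemma hasDerivAt_ellipticF (hk : k ^ 2 < 1) (θ : ℝ) :
    HasDerivAt (ellipticF k) (legendreDelta k θ)⁻¹ θ := by
  have h : Continuous fun t => (legendreDelta k t)⁻¹ :=
    (continuous_legendreDelta k).inv₀ fun t => (legendreDelta_pos hk t).ne'
  exact h.integral_hasStrictDerivAt 0 θ |>.hasDerivAt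

lemma continuous_ellipticF (hk : k ^ 2 < 1) : Continuous (ellipticF k) :=
  continuous_iff_continuousAt.mpr fun θ => (hasDerivAt_ellipticF hk θ).continuousAt

@[simp]
lemma ellipticF_zero (k : ℝ) : ellipticF k 0 = 0 := by simp [ellipticF]

lemma ellipticF_neg (k θ : ℝ) : ellipticF k (-θ) = -ellipticF k θ := by
  have h := intervalIntegral.integral_comp_neg (a := 0) (b := θ) fun t => (legendreDelta k t)⁻¹
  have hΔ : ∀ t, legendreDelta k (-t) = legendreDelta k t := fun t => by simp [legendreDelta]
  simp only [hΔ, neg_zero] at h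
  rw [ellipticF, ellipticF, h, intervalIntegral.integral_symm]

lemma ellipticF_pi_div_two (hk : k ^ 2 < 1) : ellipticF k (π / 2) = ellipticK k := by
  unfold ellipticK ellipticF
  congr 1 with t
  rw [rpow_neg (legendreDelta_radicand_pos hk t).le, ← sqrt_eq_rpow, legendreDelta]

lemma strictMono_ellipticF (hk : k ^ 2 < 1) : StrictMono (ellipticF k) :=
  strictMono_of_hasDerivAt_pos (hasDerivAt_ellipticF hk) fun θ =>
    inv_pos.mpr (legendreDelta_pos hk θ)

lemma le_ellipticF (hk : k ^ 2 < 1) {θ : ℝ} (hθ : 0 ≤ θ) : θ ≤ ellipticF k θ := by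
  have h : Monotone fun t => ellipticF k t - t :=
    monotone_of_hasDerivAt_nonneg (fun t => (hasDerivAt_ellipticF hk t).sub (hasDerivAt_id t))
      fun t => sub_nonneg.mpr
        ((one_le_inv₀ (legendreDelta_pos hk t)).mpr (legendreDelta_le_one k t))
  simpa using h hθ

lemma surjective_ellipticF (hk : k ^ 2 < 1) : Function.Surjective (ellipticF k) := by
  have htop : Tendsto (ellipticF k) atTop atTop :=
    tendsto_atTop_mono' _ ((eventually_ge_atTop 0).mono fun _ => le_ellipticF hk) tendsto_id
  have hbot : Tendsto (ellipticF k) atBot atBot := by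
    have : ellipticF k = fun t => -ellipticF k (-t) := by ext t; rw [ellipticF_neg, neg_neg]
    rw [this]
    exact tendsto_neg_atTop_atBot.comp (htop.comp tendsto_neg_atBot_atTop)
  exact (continuous_ellipticF hk).surjective htop hbot

lemma ellipticK_pos (hk : k ^ 2 < 1) : 0 < ellipticK k := by
  rw [← ellipticF_pi_div_two hk]
  exact pi_div_two_pos.trans_le (le_ellipticF hk pi_div_two_pos.le)

lemma ellipticF_jacobiAm (hk : k ^ 2 < 1) (u : ℝ) : ellipticF k (jacobiAm k u) = u :=
  Function.rightInverse_invFun (surjective_ellipticF hk) u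

lemma jacobiAm_ellipticF (hk : k ^ 2 < 1) (θ : ℝ) : jacobiAm k (ellipticF k θ) = θ :=
  Function.leftInverse_invFun (strictMono_ellipticF hk).injective θ

lemma jacobiAm_zero (hk : k ^ 2 < 1) : jacobiAm k 0 = 0 := by
  simpa using jacobiAm_ellipticF hk 0

lemma jacobiAm_ellipticK (hk : k ^ 2 < 1) : jacobiAm k (ellipticK k) = π / 2 := by
  rw [← ellipticF_pi_div_two hk, jacobiAm_ellipticF hk]

lemma jacobiAm_neg_ellipticK (hk : k ^ 2 < 1) : jacobiAm k (-ellipticK k) = -(π / 2) := by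
  rw [← ellipticF_pi_div_two hk, ← ellipticF_neg, jacobiAm_ellipticF hk]

lemma strictMono_jacobiAm (hk : k ^ 2 < 1) : StrictMono (jacobiAm k) := fun u v huv => by
  rwa [← (strictMono_ellipticF hk).lt_iff_lt, ellipticF_jacobiAm hk, ellipticF_jacobiAm hk]

lemma continuous_jacobiAm (hk : k ^ 2 < 1) : Continuous (jacobiAm k) :=
  (strictMono_jacobiAm hk).monotone.continuous_of_surjective fun θ => ⟨_, jacobiAm_ellipticF hk θ⟩

lemma hasDerivAt_jacobiAm (hk : k ^ 2 < 1) (u : ℝ) :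
    HasDerivAt (jacobiAm k) (jacobiDn k u) u := by
  simpa using! HasDerivAt.of_local_left_inverse (continuous_jacobiAm hk).continuousAt
    (hasDerivAt_ellipticF hk (jacobiAm k u)) (inv_ne_zero (legendreDelta_pos hk _).ne')
    (.of_forall (ellipticF_jacobiAm hk))

lemma hasDerivAt_jacobiSn (hk : k ^ 2 < 1) (u : ℝ) :
    HasDerivAt (jacobiSn k) (jacobiCn k u * jacobiDn k u) u :=
  (hasDerivAt_jacobiAm hk u).sin

lemma hasDerivAt_jacobiCn (hk : k ^ 2 < 1) (u : ℝ) :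
    HasDerivAt (jacobiCn k) (-jacobiSn k u * jacobiDn k u) u :=
  (hasDerivAt_jacobiAm hk u).cos

lemma hasDerivAt_jacobiDn (hk : k ^ 2 < 1) (u : ℝ) :
    HasDerivAt (jacobiDn k) (-k ^ 2 * jacobiSn k u * jacobiCn k u) u := by
  refine ((hasDerivAt_legendreDelta hk _).comp u (hasDerivAt_jacobiAm hk u)).congr_deriv ?_
  rw [jacobiDn, div_mul_cancel₀ _ (legendreDelta_pos hk _).ne', jacobiSn, jacobiCn]
  ring

lemma jacobiSn_sq_add_jacobiCn_sq (k u : ℝ) : jacobiSn k u ^ 2 + jacobiCn k u ^ 2 = 1 :=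
  sin_sq_add_cos_sq _

lemma jacobiDn_sq (hk : k ^ 2 < 1) (u : ℝ) : jacobiDn k u ^ 2 = 1 - k ^ 2 * jacobiSn k u ^ 2 :=
  legendreDelta_sq hk _

lemma jacobiDn_pos (hk : k ^ 2 < 1) (u : ℝ) : 0 < jacobiDn k u := legendreDelta_pos hk _

lemma jacobiCn_pos (hk : k ^ 2 < 1) {u : ℝ} (hu : u ∈ Ioo (-ellipticK k) (ellipticK k)) :
    0 < jacobiCn k u := by
  refine cos_pos_of_mem_Ioo ⟨?_, ?_⟩
  · simpa only [jacobiAm_neg_ellipticK hk] using strictMono_jacobiAm hk hu.1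
  · simpa only [jacobiAm_ellipticK hk] using strictMono_jacobiAm hk hu.2

lemma jacobiSn_ellipticK (hk : k ^ 2 < 1) : jacobiSn k (ellipticK k) = 1 := by
  rw [jacobiSn, jacobiAm_ellipticK hk, sin_pi_div_two]

lemma jacobiCn_ellipticK (hk : k ^ 2 < 1) : jacobiCn k (ellipticK k) = 0 := by
  rw [jacobiCn, jacobiAm_ellipticK hk, cos_pi_div_two]

end Jacobi

/-! ### The hyperbolic lemniscate sine -/

section LemniscateSine

/-- The complete elliptic integral `K` of the lemniscatic modulus `1/√2`. -/
noncomputable abbrev lemniscaticK : ℝ := ellipticK (1 / √2)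

/-- The hyperbolic lemniscate sine `sn · dn / cn` for the modulus `1/√2`. -/
noncomputable def slh (u : ℝ) : ℝ :=
  jacobiSn (1 / √2) u * jacobiDn (1 / √2) u / jacobiCn (1 / √2) u

/-- The derivative of `slh` on `(-K, K)`. -/
noncomputable def slh' (u : ℝ) : ℝ := √(1 + slh u ^ 4)

lemma lemniscatic_modulus_sq : (1 / √2) ^ 2 = 1 / 2 := by
  rw [div_pow, sq_sqrt zero_le_two, one_pow]

lemma lemniscatic_modulus_sq_lt_one : (1 / √2) ^ 2 < 1 := by
  rw [lemniscatic_modulus_sq]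
  norm_num

lemma lemniscatic_complementary_modulus : √(1 - (1 / √2) ^ 2) = 1 / √2 := by
  rw [lemniscatic_modulus_sq, one_div, one_div, ← sqrt_inv]
  norm_num

lemma lemniscaticK_pos : 0 < lemniscaticK := ellipticK_pos lemniscatic_modulus_sq_lt_one

lemma slh_zero : slh 0 = 0 := by
  rw [slh, jacobiSn, jacobiAm_zero lemniscatic_modulus_sq_lt_one, sin_zero, zero_mul, zero_div]

lemma slh'_zero : slh' 0 = 1 := by simp [slh', slh_zero]

lemma slh'_sq (u : ℝ) : slh' u ^ 2 = 1 + slh u ^ 4 := sq_sqrt (by positivity)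

lemma slh'_pos (u : ℝ) : 0 < slh' u := sqrt_pos.mpr (by positivity)

lemma slh'_eq {u : ℝ} (hu : u ∈ Ioo (-lemniscaticK) lemniscaticK) :
    slh' u = (1 + jacobiCn (1 / √2) u ^ 4) / (2 * jacobiCn (1 / √2) u ^ 2) := by
  have hc := (jacobiCn_pos lemniscatic_modulus_sq_lt_one hu).ne'
  have hsc := jacobiSn_sq_add_jacobiCn_sq (1 / √2) u
  have hd := jacobiDn_sq lemniscatic_modulus_sq_lt_one u
  rw [lemniscatic_modulus_sq] at hd
  refine (sqrt_eq_iff_mul_self_eq_of_pos (by positivity)).mpr ?_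
  rw [slh, div_pow, mul_pow, show jacobiDn (1 / √2) u ^ 4 = (jacobiDn (1 / √2) u ^ 2) ^ 2 by ring,
    show jacobiSn (1 / √2) u ^ 4 = (jacobiSn (1 / √2) u ^ 2) ^ 2 by ring, hd,
    eq_sub_of_add_eq hsc]
  field_simp
  ring

lemma hasDerivAt_slh {u : ℝ} (hu : u ∈ Ioo (-lemniscaticK) lemniscaticK) :
    HasDerivAt slh (slh' u) u := by
  have hk := lemniscatic_modulus_sq_lt_one
  have hc := (jacobiCn_pos hk hu).ne'
  have hsc := jacobiSn_sq_add_jacobiCn_sq (1 / √2) u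
  have hd := jacobiDn_sq hk u
  refine (((hasDerivAt_jacobiSn hk u).mul (hasDerivAt_jacobiDn hk u)).div
    (hasDerivAt_jacobiCn hk u) hc).congr_deriv ?_
  rw [lemniscatic_modulus_sq] at hd
  simp only [Pi.mul_apply, slh'_eq hu, neg_mul, lemniscatic_modulus_sq]
  field_simp
  linear_combination 2 * (jacobiCn (1 / √2) u ^ 2 + jacobiSn (1 / √2) u ^ 2) * hd
    - (jacobiSn (1 / √2) u ^ 2 + jacobiCn (1 / √2) u ^ 2 - 1) * hsc

lemma hasDerivAt_slh' {u : ℝ} (hu : u ∈ Ioo (-lemniscaticK) lemniscaticK) :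
    HasDerivAt slh' (2 * slh u ^ 3) u := by
  have h := (((hasDerivAt_slh hu).pow 4).const_add 1).sqrt
    (show 1 + slh u ^ 4 ≠ 0 by positivity)
  refine h.congr_deriv ?_
  have := (slh'_pos u).ne'
  simp only [Pi.pow_apply, slh', Nat.cast_ofNat] at this ⊢
  field_simp
  ring

lemma tendsto_slh_atTop : Tendsto slh (𝓝[<] lemniscaticK) atTop := by
  have hk := lemniscatic_modulus_sq_lt_one
  have hnum := ((hasDerivAt_jacobiSn hk lemniscaticK).mul
    (hasDerivAt_jacobiDn hk lemniscaticK)).continuousAt.tendsto.mono_left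
      (nhdsWithin_le_nhds (s := Iio lemniscaticK))
  have hden : Tendsto (fun u => (jacobiCn (1 / √2) u)⁻¹) (𝓝[<] lemniscaticK) atTop := by
    refine tendsto_inv_nhdsGT_zero.comp (tendsto_nhdsWithin_iff.mpr ⟨?_, ?_⟩)
    · rw [← jacobiCn_ellipticK hk]
      exact (hasDerivAt_jacobiCn hk _).continuousAt.tendsto.mono_left nhdsWithin_le_nhds
    · filter_upwards [Ioo_mem_nhdsLT (neg_lt_self lemniscaticK_pos)] with u hu
        using jacobiCn_pos hk hu
  refine hnum.pos_mul_atTop ?_ hden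
  rw [Pi.mul_apply, jacobiSn_ellipticK hk, one_mul]
  exact jacobiDn_pos hk _

end LemniscateSine

/-! ### Weierstrass elliptic functions -/

open Complex (I)
open scoped PeriodPair

section Weierstrass

variable (L : PeriodPair)

lemma isPreconnected_compl_lattice : IsPreconnected (L.lattice : Set ℂ)ᶜ := by
  have : Countable L.lattice := L.latticeEquivProd.toEquiv.countable_iff.mpr inferInstance
  exact ((Set.countable_coe_iff.mp this).isPathConnected_compl_of_one_lt_rank
    (by simp)).isConnected.isPreconnected

lemma tendsto_weierstrassP_sub_inv_sq : Tendsto (fun z => ℘[L] z - 1 / z ^ 2) (𝓝 0) (𝓝 0) := by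
  have h := (L.analyticAt_weierstrassPExcept 0).continuousAt.tendsto
  rw [L.weierstrassPExcept_zero] at h
  refine h.congr fun z => ?_
  simpa [sub_eq_add_neg] using L.weierstrassPExcept_def 0 z

lemma tendsto_norm_weierstrassP : Tendsto (fun z => ‖℘[L] z‖) (𝓝[≠] 0) atTop := by
  refine tendsto_norm_cobounded_atTop.comp (tendsto_cobounded_of_meromorphicOrderAt_neg ?_)
  rw [L.order_weierstrassP 0 L.lattice.zero_mem]
  exact WithTop.coe_lt_coe.mpr (by norm_num : (-2 : ℤ) < 0)

variable {L} {z : ℂ}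

lemma hasDerivAt_weierstrassP (hz : z ∉ L.lattice) : HasDerivAt ℘[L] (℘'[L] z) z := by
  have h := L.differentiableOn_weierstrassP.differentiableAt
    (L.isClosed_lattice.isOpen_compl.mem_nhds hz)
  simpa only [L.deriv_weierstrassP] using h.hasDerivAt

lemma derivWeierstrassP_eq_zero_of_two_mul_mem (hz : 2 * z ∈ L.lattice) : ℘'[L] z = 0 := by
  have h : ℘'[L] (-z + 2 * z) = ℘'[L] (-z) := L.derivWeierstrassP_add_coe (-z) ⟨2 * z, hz⟩
  rw [L.derivWeierstrassP_neg, show -z + 2 * z = z by ring] at h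
  exact self_eq_neg.mp h

lemma not_eqOn_derivWeierstrassP_zero : ¬ EqOn ℘'[L] 0 (L.lattice : Set ℂ)ᶜ := by
  intro h
  obtain ⟨c, hc⟩ := L.isClosed_lattice.isOpen_compl.exists_is_const_of_deriv_eq_zero
    (isPreconnected_compl_lattice L) L.differentiableOn_weierstrassP
    (by rwa [L.deriv_weierstrassP])
  have hlattice : (L.lattice : Set ℂ)ᶜ ∈ 𝓝[≠] 0 := by
    filter_upwards [self_mem_nhdsWithin, mem_nhdsWithin_of_mem_nhds
      (L.compl_lattice_sdiff_singleton_mem_nhds 0)] with z hz hz' hzL using hz' ⟨hzL, hz⟩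
  refine not_tendsto_nhds_of_tendsto_atTop (tendsto_norm_weierstrassP L) ‖c‖
    (tendsto_const_nhds.congr' ?_)
  filter_upwards [hlattice] with z hz using by rw [hc z hz]

lemma derivWeierstrassP_mul_deriv_derivWeierstrassP (hz : z ∉ L.lattice) :
    ℘'[L] z * (deriv ℘'[L] z - (6 * ℘[L] z ^ 2 - L.g₂ / 2)) = 0 := by
  have hP := hasDerivAt_weierstrassP hz
  have hP' := ((L.analyticOnNhd_derivWeierstrassP z hz).differentiableAt.hasDerivAt).pow 2
  have hcubic := (((hP.pow 3).const_mul 4).sub (hP.const_mul L.g₂)).sub_const L.g₃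
  have heq : ℘'[L] ^ 2 =ᶠ[𝓝 z] fun w => 4 * ℘[L] w ^ 3 - L.g₂ * ℘[L] w - L.g₃ := by
    filter_upwards [L.isClosed_lattice.isOpen_compl.mem_nhds hz] with w hw
      using L.derivWeierstrassP_sq w hw
  have h := (hcubic.congr_of_eventuallyEq heq).unique hP'
  simp only [Nat.cast_ofNat] at h
  linear_combination (-1 / 2) * h

lemma hasDerivAt_derivWeierstrassP (hz : z ∉ L.lattice) :
    HasDerivAt ℘'[L] (6 * ℘[L] z ^ 2 - L.g₂ / 2) z := by
  have hP' := L.analyticOnNhd_derivWeierstrassP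
  have hdiff : AnalyticOnNhd ℂ (fun z => deriv ℘'[L] z - (6 * ℘[L] z ^ 2 - L.g₂ / 2))
      (L.lattice : Set ℂ)ᶜ := fun w hw => by
    have := (hP' w hw).deriv
    have := L.analyticOnNhd_weierstrassP w hw
    fun_prop
  -- `℘'` does not vanish identically, so the identity theorem removes it from the product.
  have h := (hP'.eq_zero_or_eq_zero_of_mul_eq_zero hdiff
    (fun w hw => derivWeierstrassP_mul_deriv_derivWeierstrassP hw)
    (isPreconnected_compl_lattice L)).resolve_left fun h => not_eqOn_derivWeierstrassP_zero h
  rw [← sub_eq_zero.mp (h z hz)]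
  exact (hP' z hz).differentiableAt.hasDerivAt

lemma iteratedDeriv_weierstrassP (hz : z ∉ L.lattice) (n : ℕ) :
    iteratedDeriv n ℘[L] z = n.factorial * (L.weierstrassPSeries z).coeff n := by
  obtain ⟨r, hr, hball⟩ := Metric.nhds_basis_closedBall.mem_iff.mp
    (L.isClosed_lattice.isOpen_compl.mem_nhds hz)
  have h := (L.hasFPowerSeriesOnBall_weierstrassP z ⟨r, hr.le⟩ hr hball).hasFPowerSeriesAt
  rw [h.eq_formalMultilinearSeries (L.analyticOnNhd_weierstrassP z hz).hasFPowerSeriesAt,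
    FormalMultilinearSeries.coeff_ofScalars, mul_div_cancel₀ _ (mod_cast n.factorial_ne_zero)]

variable (L)

lemma sumInvPow_add_coe (x : ℂ) (r : ℕ) (l : L.lattice) :
    L.sumInvPow (x + l) r = L.sumInvPow x r := by
  rw [PeriodPair.sumInvPow, ← (Equiv.addRight l).tsum_eq]
  simp [PeriodPair.sumInvPow]

lemma sumInvPow_neg (x : ℂ) (r : ℕ) : L.sumInvPow (-x) r = (-1) ^ r * L.sumInvPow x r := by
  rw [PeriodPair.sumInvPow, ← (Equiv.neg L.lattice).tsum_eq, PeriodPair.sumInvPow, ← tsum_mul_left]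
  refine tsum_congr fun l => ?_
  rw [Equiv.neg_apply, Submodule.coe_neg, ← neg_sub', ← neg_one_mul, mul_pow, mul_inv,
    ← inv_pow, inv_neg_one]

lemma sumInvPow_eq_zero_of_odd {L : PeriodPair} {x : ℂ} (hx : 2 * x ∈ L.lattice) {r : ℕ}
    (hr : Odd r) : L.sumInvPow x r = 0 := by
  have h := sumInvPow_add_coe L (-x) r ⟨2 * x, hx⟩
  rw [show -x + 2 * x = x by ring, sumInvPow_neg, hr.neg_one_pow, neg_one_mul] at h
  exact self_eq_neg.mp h

lemma coeff_weierstrassPSeries_of_ne_zero (x : ℂ) {i : ℕ} (hi : i ≠ 0) :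
    (L.weierstrassPSeries x).coeff i = (i + 1) * L.sumInvPow x (i + 2) := by
  rw [PeriodPair.weierstrassPSeries, FormalMultilinearSeries.coeff_ofScalars, if_neg hi]

end Weierstrass

/-! ### The square lattice -/

section SquareLattice

lemma linearIndependent_two_two_mul_I : LinearIndependent ℝ ![(2 : ℂ), 2 * I] := by
  refine LinearIndependent.pair_iff.mpr fun s t h => ?_
  simpa using And.intro (congrArg Complex.re h) (congrArg Complex.im h)

/-- The lattice `2ℤ[i]`, presented by the periods `2` and `2i`. -/
noncomputable def squareLattice : PeriodPair := ⟨2, 2 * I, linearIndependent_two_two_mul_I⟩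

variable {z : ℂ} {x : ℝ}

lemma mem_squareLattice : z ∈ squareLattice.lattice ↔ ∃ a b : ℤ, z = 2 * a + 2 * b * I := by
  rw [PeriodPair.mem_lattice]
  refine exists_congr fun a => exists_congr fun b => ?_
  rw [eq_comm, squareLattice]
  ring_nf

lemma two_mem_squareLattice : (2 : ℂ) ∈ squareLattice.lattice :=
  mem_squareLattice.mpr ⟨1, 0, by simp⟩

lemma two_mul_I_mem_squareLattice : 2 * I ∈ squareLattice.lattice :=
  mem_squareLattice.mpr ⟨0, 1, by simp⟩

lemma I_mul_mem_squareLattice (h : z ∈ squareLattice.lattice) : I * z ∈ squareLattice.lattice := by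
  obtain ⟨a, b, rfl⟩ := mem_squareLattice.mp h
  refine mem_squareLattice.mpr ⟨-b, a, ?_⟩
  push_cast
  linear_combination 2 * b * Complex.I_sq

lemma conj_mem_squareLattice (h : z ∈ squareLattice.lattice) :
    starRingEnd ℂ z ∈ squareLattice.lattice := by
  obtain ⟨a, b, rfl⟩ := mem_squareLattice.mp h
  exact mem_squareLattice.mpr ⟨a, -b, by simp [Complex.conj_ofNat]⟩

lemma ofReal_sub_one_notMem_squareLattice (hx : x ∈ Ioo (-1 : ℝ) 1) :
    (x - 1 : ℂ) ∉ squareLattice.lattice := fun h => by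
  obtain ⟨a, b, hab⟩ := mem_squareLattice.mp h
  have hre : x - 1 = 2 * a := by simpa using congrArg Complex.re hab
  have h₁ : (-1 : ℝ) < a := by linarith [hx.1]
  have h₂ : (a : ℝ) < 0 := by linarith [hx.2]
  have h₁' : -1 < a := mod_cast h₁
  have h₂' : a < 0 := mod_cast h₂
  omega

lemma ofReal_sub_I_notMem_squareLattice (x : ℝ) : (x - I : ℂ) ∉ squareLattice.lattice := fun h => by
  obtain ⟨a, b, hab⟩ := mem_squareLattice.mp h
  have him : (-1 : ℝ) = 2 * b := by simpa using congrArg Complex.im hab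
  have : -1 = 2 * b := mod_cast him
  omega

lemma neg_one_notMem_squareLattice : (-1 : ℂ) ∉ squareLattice.lattice := by
  simpa using ofReal_sub_one_notMem_squareLattice (x := 0) (by simp)

lemma neg_I_notMem_squareLattice : -I ∉ squareLattice.lattice := by
  simpa using ofReal_sub_I_notMem_squareLattice 0

/-- Multiplication by `i` as a permutation of the square lattice. -/
noncomputable def squareLatticeRotation : squareLattice.lattice ≃ squareLattice.lattice where
  toFun l := ⟨I * l, I_mul_mem_squareLattice l.2⟩
  invFun l := ⟨-(I * l), neg_mem (I_mul_mem_squareLattice l.2)⟩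
  left_inv l := by ext; simp [← mul_assoc]
  right_inv l := by ext; simp [← mul_assoc]

/-- Complex conjugation as a permutation of the square lattice. -/
noncomputable def squareLatticeConj : squareLattice.lattice ≃ squareLattice.lattice where
  toFun l := ⟨starRingEnd ℂ l, conj_mem_squareLattice l.2⟩
  invFun l := ⟨starRingEnd ℂ l, conj_mem_squareLattice l.2⟩
  left_inv l := by ext; simp
  right_inv l := by ext; simp

lemma weierstrassP_squareLattice_I_mul (z : ℂ) :
    ℘[squareLattice] (I * z) = -℘[squareLattice] z := by
  simp only [PeriodPair.weierstrassP]
  rw [← squareLatticeRotation.tsum_eq, ← tsum_neg]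
  refine tsum_congr fun l => ?_
  simp only [squareLatticeRotation, Equiv.coe_fn_mk]
  rw [← mul_sub, mul_pow, mul_pow, Complex.I_sq, neg_one_mul, neg_one_mul, div_neg, div_neg]
  ring

lemma weierstrassP_squareLattice_conj (z : ℂ) :
    ℘[squareLattice] (starRingEnd ℂ z) = starRingEnd ℂ (℘[squareLattice] z) := by
  simp only [PeriodPair.weierstrassP]
  rw [← squareLatticeConj.tsum_eq, Complex.conj_tsum]
  simp [squareLatticeConj]

lemma sumInvPow_squareLattice_I_mul (x : ℂ) (r : ℕ) :
    squareLattice.sumInvPow (I * x) r = (I ^ r)⁻¹ * squareLattice.sumInvPow x r := by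
  simp only [PeriodPair.sumInvPow]
  rw [← squareLatticeRotation.tsum_eq, ← tsum_mul_left]
  refine tsum_congr fun l => ?_
  simp only [squareLatticeRotation, Equiv.coe_fn_mk]
  rw [← mul_sub, mul_pow, mul_inv]

lemma g₃_squareLattice : squareLattice.g₃ = 0 := by
  have h := sumInvPow_squareLattice_I_mul 0 6
  rw [mul_zero, PeriodPair.sumInvPow_zero, show I ^ 6 = -1 by
    rw [show 6 = 2 * 3 by rfl, pow_mul, Complex.I_sq]; norm_num, inv_neg_one, neg_one_mul,
    self_eq_neg] at h
  rw [PeriodPair.g₃, h, mul_zero]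

lemma weierstrassP_squareLattice_I : ℘[squareLattice] I = -℘[squareLattice] 1 := by
  simpa using weierstrassP_squareLattice_I_mul 1

lemma ofReal_re_weierstrassP_squareLattice_one :
    ((℘[squareLattice] 1).re : ℂ) = ℘[squareLattice] 1 := by
  refine Complex.conj_eq_iff_re.mp ?_
  rw [← weierstrassP_squareLattice_conj, map_one]

end SquareLattice

/-! ### The square lattice and the hyperbolic lemniscate sine -/

section Identification

lemma eqOn_weierstrassP_sub_half_period {L : PeriodPair} {z₀ : ℂ} {r : ℝ} (hr : 0 < r)
    (hz₀ : 2 * z₀ ∈ L.lattice) (hL : ∀ x ∈ Ioo (-r) r, (x - z₀ : ℂ) ∉ L.lattice) {f f' : ℝ → ℂ}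
    (hf : ∀ x ∈ Ioo (-r) r, HasDerivAt f (f' x) x)
    (hf' : ∀ x ∈ Ioo (-r) r, HasDerivAt f' (6 * f x ^ 2 - L.g₂ / 2) x)
    (h₀ : f 0 = ℘[L] z₀) (h₀' : f' 0 = 0) :
    EqOn (fun x : ℝ => ℘[L] (x - z₀)) f (Ioo (-r) r) := by
  refine eqOn_of_hasDerivAt_second_order (P := fun w : ℂ => 6 * w ^ 2 - L.g₂ / 2) (by fun_prop)
    (f' := fun x => ℘'[L] (x - z₀)) isOpen_Ioo isPreconnected_Ioo
    (fun x hx => ((hasDerivAt_weierstrassP (hL x hx)).comp_sub_const (x : ℂ) z₀).comp_ofReal)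
    (fun x hx => ((hasDerivAt_derivWeierstrassP (hL x hx)).comp_sub_const (x : ℂ) z₀).comp_ofReal)
    hf hf' (t₀ := 0) ⟨neg_lt_zero.mpr hr, hr⟩ ?_ ?_
  · rw [Complex.ofReal_zero, zero_sub, L.weierstrassP_neg, h₀]
  · rw [Complex.ofReal_zero, zero_sub, L.derivWeierstrassP_neg,
      derivWeierstrassP_eq_zero_of_two_mul_mem hz₀, neg_zero, h₀']

lemma tendsto_ofReal_sub_one : Tendsto (fun x : ℝ => (x - 1 : ℂ)) (𝓝[<] 1) (𝓝[≠] 0) := by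
  refine tendsto_nhdsWithin_iff.mpr ⟨?_, ?_⟩
  · have h : Continuous fun x : ℝ => (x - 1 : ℂ) := by fun_prop
    simpa using (h.tendsto 1).mono_left nhdsWithin_le_nhds
  · filter_upwards [self_mem_nhdsWithin] with x hx
    exact sub_ne_zero.mpr (mod_cast (mem_Iio.mp hx).ne)

lemma tendsto_norm_weierstrassP_ofReal_sub_one (L : PeriodPair) :
    Tendsto (fun x : ℝ => ‖℘[L] (x - 1)‖) (𝓝[<] 1) atTop :=
  (tendsto_norm_weierstrassP L).comp tendsto_ofReal_sub_one

lemma continuousAt_weierstrassP_ofReal_sub {L : PeriodPair} {z₀ : ℂ} {x : ℝ}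
    (hx : (x - z₀ : ℂ) ∉ L.lattice) : ContinuousAt (fun x : ℝ => ℘[L] (x - z₀)) x :=
  ((hasDerivAt_weierstrassP hx).comp_sub_const (x : ℂ) z₀).comp_ofReal.continuousAt

/-- If `℘(1) = 0 = ℘(i)`, then `℘(x - 1)` and `℘(x - i)` solve the same initial value problem,
although only the former has a pole at `x = 1`. -/
lemma weierstrassP_squareLattice_one_ne_zero : ℘[squareLattice] 1 ≠ 0 := fun h => by
  have heq := eqOn_weierstrassP_sub_half_period one_pos (by simpa using two_mem_squareLattice)
    (fun x => ofReal_sub_one_notMem_squareLattice) (f := fun x => ℘[squareLattice] (x - I))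
    (f' := fun x => ℘'[squareLattice] (x - I))
    (fun x _ => ((hasDerivAt_weierstrassP
      (ofReal_sub_I_notMem_squareLattice x)).comp_sub_const (x : ℂ) I).comp_ofReal)
    (fun x _ => ((hasDerivAt_derivWeierstrassP
      (ofReal_sub_I_notMem_squareLattice x)).comp_sub_const (x : ℂ) I).comp_ofReal)
    (by simp [weierstrassP_squareLattice_I, h])
    (by simp [derivWeierstrassP_eq_zero_of_two_mul_mem two_mul_I_mem_squareLattice])
  refine not_tendsto_norm_atTop_of_continuousAt ?_
    (continuousAt_weierstrassP_ofReal_sub (ofReal_sub_I_notMem_squareLattice 1))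
    (tendsto_norm_weierstrassP_ofReal_sub_one squareLattice)
  filter_upwards [Ioo_mem_nhdsLT (neg_lt_self one_pos)] with x hx using heq hx

lemma g₂_squareLattice : squareLattice.g₂ = 4 * ℘[squareLattice] 1 ^ 2 := by
  have h := squareLattice.derivWeierstrassP_sq _ neg_one_notMem_squareLattice
  rw [squareLattice.derivWeierstrassP_neg, squareLattice.weierstrassP_neg, g₃_squareLattice,
    derivWeierstrassP_eq_zero_of_two_mul_mem (by simpa using two_mem_squareLattice)] at h
  have h' : ℘[squareLattice] 1 * (4 * ℘[squareLattice] 1 ^ 2 - squareLattice.g₂) = 0 := by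
    linear_combination -h
  exact (sub_eq_zero.mp
    ((mul_eq_zero.mp h').resolve_left weierstrassP_squareLattice_one_ne_zero)).symm

/-- The solution `c² (slh² + ε slh')(c x) / 2` of `f'' = 6 f² - c⁴/2`, where `ε = ±1`. -/
noncomputable def lemniscateSolution (ε c x : ℝ) : ℝ :=
  c ^ 2 / 2 * (slh (c * x) ^ 2 + ε * slh' (c * x))

/-- The derivative of `lemniscateSolution`. -/
noncomputable def lemniscateSolution' (ε c x : ℝ) : ℝ :=
  c ^ 3 * (slh (c * x) * slh' (c * x) + ε * slh (c * x) ^ 3)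

variable {ε c x r : ℝ}

lemma hasDerivAt_slh_const_mul (hx : c * x ∈ Ioo (-lemniscaticK) lemniscaticK) :
    HasDerivAt (fun x => slh (c * x)) (c * slh' (c * x)) x := by
  simpa using! (hasDerivAt_slh hx).scomp x (hasDerivAt_const_mul c)

lemma hasDerivAt_slh'_const_mul (hx : c * x ∈ Ioo (-lemniscaticK) lemniscaticK) :
    HasDerivAt (fun x => slh' (c * x)) (c * (2 * slh (c * x) ^ 3)) x := by
  simpa using! (hasDerivAt_slh' hx).scomp x (hasDerivAt_const_mul c)

lemma hasDerivAt_lemniscateSolution (hx : c * x ∈ Ioo (-lemniscaticK) lemniscaticK) :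
    HasDerivAt (lemniscateSolution ε c) (lemniscateSolution' ε c x) x := by
  refine ((((hasDerivAt_slh_const_mul hx).pow 2).add
    ((hasDerivAt_slh'_const_mul hx).const_mul ε)).const_mul (c ^ 2 / 2)).congr_deriv ?_
  simp only [lemniscateSolution', Nat.cast_ofNat, Nat.add_one_sub_one, pow_one]
  ring

lemma hasDerivAt_lemniscateSolution' (hε : ε ^ 2 = 1)
    (hx : c * x ∈ Ioo (-lemniscaticK) lemniscaticK) :
    HasDerivAt (lemniscateSolution' ε c) (6 * lemniscateSolution ε c x ^ 2 - c ^ 4 / 2) x := by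
  refine ((((hasDerivAt_slh_const_mul hx).mul (hasDerivAt_slh'_const_mul hx)).add
    (((hasDerivAt_slh_const_mul hx).pow 3).const_mul ε)).const_mul (c ^ 3)).congr_deriv ?_
  simp only [lemniscateSolution, Nat.cast_ofNat, Nat.add_one_sub_one]
  linear_combination (-c ^ 4 / 2) * slh'_sq (c * x) + (-3 / 2 * c ^ 4 * slh' (c * x) ^ 2) * hε

lemma mul_mem_Ioo_lemniscaticK (hc : 0 < c) (hr : r ≤ lemniscaticK / c) (hx : x ∈ Ioo (-r) r) :
    c * x ∈ Ioo (-lemniscaticK) lemniscaticK := by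
  have hx' := (abs_lt.mpr hx).trans_le hr
  rw [lt_div_iff₀' hc] at hx'
  rwa [mem_Ioo, ← abs_lt, abs_mul, abs_of_pos hc]

lemma eqOn_weierstrassP_sub_half_period_lemniscateSolution {L : PeriodPair} {z₀ : ℂ} (hr : 0 < r)
    (hz₀ : 2 * z₀ ∈ L.lattice) (hL : ∀ x ∈ Ioo (-r) r, (x - z₀ : ℂ) ∉ L.lattice)
    (hg₂ : L.g₂ = 4 * ℘[L] z₀ ^ 2) (hε : ε ^ 2 = 1) (hc : 0 < c)
    (h : ℘[L] z₀ = ((ε * c ^ 2 / 2 : ℝ) : ℂ)) (hrc : r ≤ lemniscaticK / c) :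
    EqOn (fun x : ℝ => ℘[L] (x - z₀)) (fun x => (lemniscateSolution ε c x : ℂ)) (Ioo (-r) r) := by
  have hg : L.g₂ / 2 = ((c ^ 4 / 2 : ℝ) : ℂ) := by
    rw [hg₂, h]
    norm_cast
    linear_combination (c ^ 4 / 2) * hε
  refine eqOn_weierstrassP_sub_half_period hr hz₀ hL
    (f' := fun x => (lemniscateSolution' ε c x : ℂ))
    (fun x hx => (hasDerivAt_lemniscateSolution (mul_mem_Ioo_lemniscaticK hc hrc hx)).ofReal_comp)
    (fun x hx => ?_) ?_ ?_
  · rw [hg]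
    exact_mod_cast
      (hasDerivAt_lemniscateSolution' hε (mul_mem_Ioo_lemniscaticK hc hrc hx)).ofReal_comp
  · rw [h, lemniscateSolution, mul_zero, slh_zero, slh'_zero]
    push_cast
    ring
  · simp [lemniscateSolution', slh_zero]

lemma tendsto_norm_lemniscateSolution_one (hc : 0 < c) :
    Tendsto (fun x => ‖(lemniscateSolution 1 c x : ℂ)‖) (𝓝[<] (lemniscaticK / c)) atTop := by
  have hmul : Tendsto (fun x : ℝ => c * x) (𝓝[<] (lemniscaticK / c)) (𝓝[<] lemniscaticK) := by
    refine tendsto_nhdsWithin_iff.mpr ⟨?_, ?_⟩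
    · have h := (continuous_const_mul c).tendsto (lemniscaticK / c)
      rw [mul_div_cancel₀ _ hc.ne'] at h
      exact h.mono_left nhdsWithin_le_nhds
    · filter_upwards [self_mem_nhdsWithin] with x hx using (lt_div_iff₀' hc).mp hx
  refine tendsto_atTop_mono (fun x => ?_) (((tendsto_pow_atTop two_ne_zero).comp
    (tendsto_slh_atTop.comp hmul)).const_mul_atTop (show 0 < c ^ 2 / 2 by positivity))
  rw [Complex.norm_real, lemniscateSolution]
  refine le_trans ?_ (le_abs_self _)
  simp only [Function.comp_apply, one_mul]
  have := slh'_pos (c * x)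
  gcongr
  linarith

lemma eqOn_weierstrassP_sub_one (hε : ε ^ 2 = 1) (hc : 0 < c)
    (h : ℘[squareLattice] 1 = ((ε * c ^ 2 / 2 : ℝ) : ℂ)) :
    EqOn (fun x : ℝ => ℘[squareLattice] (x - 1)) (fun x => (lemniscateSolution ε c x : ℂ))
      (Ioo (-(min 1 (lemniscaticK / c))) (min 1 (lemniscaticK / c))) :=
  eqOn_weierstrassP_sub_half_period_lemniscateSolution
    (lt_min one_pos (div_pos lemniscaticK_pos hc)) (by simpa using two_mem_squareLattice)
    (fun _ hx => ofReal_sub_one_notMem_squareLattice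
      (Ioo_subset_Ioo (neg_le_neg (min_le_left _ _)) (min_le_left _ _) hx))
    g₂_squareLattice hε hc h (min_le_right _ _)

lemma eqOn_weierstrassP_sub_I (hε : ε ^ 2 = 1) (hc : 0 < c)
    (h : ℘[squareLattice] 1 = ((-ε * c ^ 2 / 2 : ℝ) : ℂ)) :
    EqOn (fun x : ℝ => ℘[squareLattice] (x - I)) (fun x => (lemniscateSolution ε c x : ℂ))
      (Ioo (-(lemniscaticK / c)) (lemniscaticK / c)) := by
  refine eqOn_weierstrassP_sub_half_period_lemniscateSolution (div_pos lemniscaticK_pos hc)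
    two_mul_I_mem_squareLattice (fun x _ => ofReal_sub_I_notMem_squareLattice x)
    ?_ hε hc ?_ le_rfl
  · rw [weierstrassP_squareLattice_I, neg_sq, g₂_squareLattice]
  · rw [weierstrassP_squareLattice_I, h]
    push_cast
    ring

lemma re_weierstrassP_squareLattice_one_pos : 0 < (℘[squareLattice] 1).re := by
  by_contra! hle
  have hne : (℘[squareLattice] 1).re ≠ 0 := fun h => weierstrassP_squareLattice_one_ne_zero (by
    rw [← ofReal_re_weierstrassP_squareLattice_one, h, Complex.ofReal_zero])
  have hpos : 0 < -2 * (℘[squareLattice] 1).re := by linarith [lt_of_le_of_ne hle hne]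
  -- Otherwise `℘(x - i)`, which is regular on the real line, would blow up.
  have hc := sqrt_pos.mpr hpos
  have heq := eqOn_weierstrassP_sub_I (one_pow 2) hc
    (ofReal_re_weierstrassP_squareLattice_one.symm.trans (by rw [sq_sqrt hpos.le]; ring_nf))
  refine not_tendsto_norm_atTop_of_continuousAt ?_
    (continuousAt_weierstrassP_ofReal_sub (ofReal_sub_I_notMem_squareLattice _))
    (tendsto_norm_lemniscateSolution_one hc)
  filter_upwards [Ioo_mem_nhdsLT (neg_lt_self (div_pos lemniscaticK_pos hc))] with x hx
    using (heq hx).symm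

/-- Both sides measure the position of the first pole of `℘(x - 1)`, which is at `x = 1` and, in
terms of the hyperbolic lemniscate sine, at `x = K / √(2 ℘(1))`. -/
lemma weierstrassP_squareLattice_one : ℘[squareLattice] 1 = ((lemniscaticK ^ 2 / 2 : ℝ) : ℂ) := by
  have hpos : 0 < 2 * (℘[squareLattice] 1).re := by linarith [re_weierstrassP_squareLattice_one_pos]
  obtain ⟨c, hc, hc'⟩ : ∃ c, 0 < c ∧ c ^ 2 = 2 * (℘[squareLattice] 1).re :=
    ⟨_, sqrt_pos.mpr hpos, sq_sqrt hpos.le⟩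
  have hone : ℘[squareLattice] 1 = ((1 * c ^ 2 / 2 : ℝ) : ℂ) := by
    rw [hc', one_mul, mul_div_cancel_left₀ _ two_ne_zero,
      ofReal_re_weierstrassP_squareLattice_one]
  have hK := div_pos lemniscaticK_pos hc
  have hblowup : (1 : ℝ) = lemniscaticK / c := by
    refine eq_of_tendsto_norm_atTop_of_eqOn (a := 0) one_pos hK
      ((eqOn_weierstrassP_sub_one (one_pow 2) hc hone).mono
        (Ioo_subset_Ioo_left (neg_nonpos.mpr (le_min zero_le_one hK.le))))
      (fun x hx => continuousAt_weierstrassP_ofReal_sub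
        (ofReal_sub_one_notMem_squareLattice ⟨by linarith [hx.1], hx.2⟩))
      (fun x hx => (hasDerivAt_lemniscateSolution (mul_mem_Ioo_lemniscaticK hc le_rfl
        ⟨by linarith [hx.1], hx.2⟩)).ofReal_comp.continuousAt)
      (tendsto_norm_weierstrassP_ofReal_sub_one _) (tendsto_norm_lemniscateSolution_one hc)
  rw [hone, ← (eq_div_iff hc.ne').mp hblowup, one_mul, one_mul]

lemma weierstrassP_sub_one_eq (hx : x ∈ Ioo (-1 : ℝ) 1) :
    ℘[squareLattice] (x - 1) = lemniscateSolution 1 lemniscaticK x :=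
  eqOn_weierstrassP_sub_one (one_pow 2) lemniscaticK_pos
    (by rw [one_mul, weierstrassP_squareLattice_one])
    (by rwa [div_self lemniscaticK_pos.ne', min_self])

lemma weierstrassP_sub_I_eq (hx : x ∈ Ioo (-1 : ℝ) 1) :
    ℘[squareLattice] (x - I) = lemniscateSolution (-1) lemniscaticK x :=
  eqOn_weierstrassP_sub_I (by norm_num) lemniscaticK_pos
    (by rw [neg_neg, one_mul, weierstrassP_squareLattice_one])
    (by rwa [div_self lemniscaticK_pos.ne'])

lemma lemniscaticK_mul_mem_Ioo (hx : x ∈ Ioo (-1 : ℝ) 1) :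
    lemniscaticK * x ∈ Ioo (-lemniscaticK) lemniscaticK :=
  mul_mem_Ioo_lemniscaticK lemniscaticK_pos (div_self lemniscaticK_pos.ne').ge hx

lemma weierstrassP_sub_one_add_sub_I (hx : x ∈ Ioo (-1 : ℝ) 1) :
    ℘[squareLattice] (x - 1) + ℘[squareLattice] (x - I) =
      (lemniscaticK : ℂ) ^ 2 * (slh (lemniscaticK * x) : ℂ) ^ 2 := by
  rw [weierstrassP_sub_one_eq hx, weierstrassP_sub_I_eq hx, lemniscateSolution, lemniscateSolution]
  push_cast
  ring

lemma weierstrassP_sub_one_sub_sub_I (hx : x ∈ Ioo (-1 : ℝ) 1) :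
    ℘[squareLattice] (x - 1) - ℘[squareLattice] (x - I) =
      (lemniscaticK : ℂ) ^ 2 * (slh' (lemniscaticK * x) : ℂ) := by
  rw [weierstrassP_sub_one_eq hx, weierstrassP_sub_I_eq hx, lemniscateSolution, lemniscateSolution]
  push_cast
  ring

end Identification

/-! ### Taylor coefficients at the origin -/

section TaylorCoefficients

lemma analyticAt_weierstrassP_sub {L : PeriodPair} {z a : ℂ} (h : z - a ∉ L.lattice) :
    AnalyticAt ℂ (fun z => ℘[L] (z - a)) z :=
  AnalyticAt.fun_comp (L.analyticOnNhd_weierstrassP _ h) (by fun_prop)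

lemma iteratedDeriv_weierstrassP_sub {L : PeriodPair} {z a : ℂ} (h : z - a ∉ L.lattice) (n : ℕ) :
    iteratedDeriv n (fun z => ℘[L] (z - a)) z =
      n.factorial * (L.weierstrassPSeries (z - a)).coeff n := by
  simp only [iteratedDeriv_comp_sub_const, iteratedDeriv_weierstrassP h]

/-- Restricting to the real line first lets a linear combination of translates of `℘` be expanded
through real differential equations. -/
lemma iteratedDeriv_weierstrassP_sub_one_add_mul (ε : ℂ) (n : ℕ) :
    iteratedDeriv n (fun x : ℝ => ℘[squareLattice] (x - 1) + ε * ℘[squareLattice] (x - I)) 0 =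
      n.factorial * ((squareLattice.weierstrassPSeries (-1)).coeff n +
        ε * (squareLattice.weierstrassPSeries (-I)).coeff n) := by
  have hone {x : ℝ} (hx : x ∈ Ioo (-1 : ℝ) 1) :=
    analyticAt_weierstrassP_sub (ofReal_sub_one_notMem_squareLattice hx)
  have hI (x : ℝ) := (analyticAt_const (v := ε)).fun_mul
    (analyticAt_weierstrassP_sub (ofReal_sub_I_notMem_squareLattice x))
  have hone0 : (0 : ℂ) - 1 ∉ squareLattice.lattice := by
    simpa only [zero_sub] using neg_one_notMem_squareLattice
  have hI0 : 0 - I ∉ squareLattice.lattice := by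
    simpa only [zero_sub] using neg_I_notMem_squareLattice
  rw [eqOn_iteratedDeriv_comp_ofReal isOpen_Ioo (fun x hx => (hone hx).fun_add (hI x)) n
      (show (0 : ℝ) ∈ Ioo (-1 : ℝ) 1 by norm_num)]
  simp only [Complex.ofReal_zero]
  rw [iteratedDeriv_fun_add (analyticAt_weierstrassP_sub hone0).contDiffAt
      (analyticAt_const.fun_mul (analyticAt_weierstrassP_sub hI0)).contDiffAt,
    iteratedDeriv_const_mul_field, iteratedDeriv_weierstrassP_sub hone0,
    iteratedDeriv_weierstrassP_sub hI0, zero_sub, zero_sub]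
  ring

lemma hasDerivAt_ofReal_slh_lemniscaticK_mul {x : ℝ} (hx : x ∈ Ioo (-1 : ℝ) 1) :
    HasDerivAt (fun x : ℝ => (slh (lemniscaticK * x) : ℂ))
      (lemniscaticK * slh' (lemniscaticK * x) : ℂ) x := by
  exact_mod_cast (hasDerivAt_slh_const_mul (lemniscaticK_mul_mem_Ioo hx)).ofReal_comp

lemma hasDerivAt_ofReal_slh'_lemniscaticK_mul {x : ℝ} (hx : x ∈ Ioo (-1 : ℝ) 1) :
    HasDerivAt (fun x : ℝ => (lemniscaticK * slh' (lemniscaticK * x) : ℂ))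
      ((lemniscaticK : ℂ) ^ 2 * (2 * (slh (lemniscaticK * x) : ℂ) ^ 3)) x := by
  have h := (hasDerivAt_slh'_const_mul (lemniscaticK_mul_mem_Ioo hx)).const_mul lemniscaticK
  convert h.ofReal_comp using 1
  · ext; push_cast; rfl
  · push_cast; ring

lemma lemniscaticK_mul_slh'_sq (u : ℝ) :
    (lemniscaticK * slh' u : ℂ) ^ 2 = (lemniscaticK : ℂ) ^ 2 * (1 + (slh u : ℂ) ^ 4) := by
  rw [mul_pow]
  exact_mod_cast congrArg _ (slh'_sq u)

open Polynomial

lemma lemniscaticK_pow_mul_coeff_one (n : ℕ) :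
    (lemniscaticK : ℂ) ^ (4 * n + 2) * ((lemniscateOp ℤ ^ (2 * n)) X).coeff 1 =
      (4 * n).factorial * ((squareLattice.weierstrassPSeries (-1)).coeff (4 * n) -
        (squareLattice.weierstrassPSeries (-I)).coeff (4 * n)) := by
  have hmem : (0 : ℝ) ∈ Ioo (-1 : ℝ) 1 := by norm_num
  have heq : EqOn
      (fun x : ℝ => ℘[squareLattice] (x - 1) + -1 * ℘[squareLattice] (x - I))
      (fun x : ℝ => (lemniscaticK : ℂ) * (lemniscaticK * slh' (lemniscaticK * x) *
        aeval (slh (lemniscaticK * x) : ℂ) (derivative (X : ℤ[X])))) (Ioo (-1) 1) := fun x hx => by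
    simp only [neg_one_mul, ← sub_eq_add_neg, weierstrassP_sub_one_sub_sub_I hx, derivative_X,
      map_one]
    ring
  have h := iteratedDeriv_weierstrassP_sub_one_add_mul (-1) (4 * n)
  rw [heq.iteratedDeriv_of_isOpen isOpen_Ioo _ hmem, iteratedDeriv_const_mul_field,
    show 4 * n = 2 * (2 * n) by ring,
    iteratedDeriv_two_mul_mul_aeval_derivative isOpen_Ioo
      (fun x hx => hasDerivAt_ofReal_slh_lemniscaticK_mul hx)
      (fun x hx => hasDerivAt_ofReal_slh'_lemniscaticK_mul hx)
      (fun x _ => lemniscaticK_mul_slh'_sq _) X _ hmem] at h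
  simp only [mul_zero, slh_zero, slh'_zero, Complex.ofReal_zero, Complex.ofReal_one, neg_one_mul,
    ← coeff_zero_eq_aeval_zero', coeff_derivative, eq_intCast, ← sub_eq_add_neg] at h
  rw [show 4 * n = 2 * (2 * n) by ring, ← h]
  push_cast
  ring

lemma lemniscaticK_pow_mul_coeff_zero (n : ℕ) :
    (lemniscaticK : ℂ) ^ (4 * n + 4) * ((lemniscateOp ℤ ^ (2 * n + 1)) (X ^ 2)).coeff 0 =
      (4 * n + 2).factorial * ((squareLattice.weierstrassPSeries (-1)).coeff (4 * n + 2) +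
        (squareLattice.weierstrassPSeries (-I)).coeff (4 * n + 2)) := by
  have hmem : (0 : ℝ) ∈ Ioo (-1 : ℝ) 1 := by norm_num
  have heq : EqOn
      (fun x : ℝ => ℘[squareLattice] (x - 1) + 1 * ℘[squareLattice] (x - I))
      (fun x : ℝ => (lemniscaticK : ℂ) ^ 2 *
        aeval (slh (lemniscaticK * x) : ℂ) (X ^ 2 : ℤ[X])) (Ioo (-1) 1) := fun x hx => by
    simp only [one_mul, weierstrassP_sub_one_add_sub_I hx, map_pow, aeval_X]
  have h := iteratedDeriv_weierstrassP_sub_one_add_mul 1 (4 * n + 2)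
  rw [heq.iteratedDeriv_of_isOpen isOpen_Ioo _ hmem, iteratedDeriv_const_mul_field,
    show 4 * n + 2 = 2 * (2 * n + 1) by ring,
    iteratedDeriv_two_mul_aeval isOpen_Ioo
      (fun x hx => hasDerivAt_ofReal_slh_lemniscaticK_mul hx)
      (fun x hx => hasDerivAt_ofReal_slh'_lemniscaticK_mul hx)
      (fun x _ => lemniscaticK_mul_slh'_sq _) _ _ hmem] at h
  simp only [mul_zero, slh_zero, Complex.ofReal_zero, one_mul, ← coeff_zero_eq_aeval_zero',
    eq_intCast] at h
  rw [show 4 * n + 2 = 2 * (2 * n + 1) by ring, ← h]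
  ring

end TaylorCoefficients

/-! ### Laplace integrals of powers -/

section LaplaceIntegral

lemma integral_pow_mul_exp_neg_mul_Ioi (m : ℕ) {c : ℝ} (hc : 0 < c) :
    ∫ t in Ioi (0 : ℝ), t ^ m * exp (-(c * t)) = m.factorial * (c ^ (m + 1))⁻¹ := by
  have hGamma := integral_rpow_mul_exp_neg_mul_Ioi (a := (m + 1 : ℝ)) (by positivity) hc
  rw [Gamma_nat_eq_factorial, ← Nat.cast_succ, rpow_natCast, one_div, inv_pow, mul_comm] at hGamma
  rw [← hGamma]
  refine setIntegral_congr_fun measurableSet_Ioi fun t _ => ?_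
  simp only [Nat.cast_succ, add_sub_cancel_right, rpow_natCast]

lemma integrableOn_pow_mul_exp_neg_mul_Ioi (m : ℕ) {c : ℝ} (hc : 0 < c) :
    IntegrableOn (fun t : ℝ => t ^ m * exp (-(c * t))) (Ioi 0) := by
  refine not_imp_comm.mp integral_undef ?_
  rw [integral_pow_mul_exp_neg_mul_Ioi m hc]
  have := m.factorial_ne_zero
  positivity

variable (m : ℕ) {c : ℂ}

lemma norm_pow_mul_cexp_neg_mul (c : ℂ) {t : ℝ} (ht : t ∈ Ioi (0 : ℝ)) :
    ‖(t : ℂ) ^ m * Complex.exp (-(c * t))‖ = t ^ m * exp (-(c.re * t)) := by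
  simp [Complex.norm_exp, abs_of_pos (mem_Ioi.mp ht)]

lemma integrableOn_pow_mul_cexp_neg_mul_Ioi (hc : 0 < c.re) :
    IntegrableOn (fun t : ℝ => (t : ℂ) ^ m * Complex.exp (-(c * t))) (Ioi 0) := by
  refine (integrableOn_pow_mul_exp_neg_mul_Ioi m hc).mono' (by fun_prop) ?_
  filter_upwards [ae_restrict_mem measurableSet_Ioi] with t ht
  rw [norm_pow_mul_cexp_neg_mul m c ht]

lemma integral_norm_pow_mul_cexp_neg_mul_Ioi (hc : 0 < c.re) :
    ∫ t in Ioi (0 : ℝ), ‖(t : ℂ) ^ m * Complex.exp (-(c * t))‖ =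
      m.factorial * (c.re ^ (m + 1))⁻¹ := by
  rw [← integral_pow_mul_exp_neg_mul_Ioi m hc]
  exact setIntegral_congr_fun measurableSet_Ioi fun t ht => norm_pow_mul_cexp_neg_mul m c ht

lemma hasDerivAt_pow_succ_mul_cexp_neg_mul (c : ℂ) (t : ℝ) :
    HasDerivAt (fun t : ℝ => (t : ℂ) ^ (m + 1) * Complex.exp (-(c * t)))
      ((m + 1) * ((t : ℂ) ^ m * Complex.exp (-(c * t))) -
        c * ((t : ℂ) ^ (m + 1) * Complex.exp (-(c * t)))) t := by
  have h := (hasDerivAt_pow (m + 1) (t : ℂ)).fun_mul ((hasDerivAt_const_mul c).fun_neg.cexp)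
  refine h.comp_ofReal.congr_deriv ?_
  simp only [add_tsub_cancel_right, Nat.cast_add, Nat.cast_one]
  ring

lemma mul_integral_pow_succ_mul_cexp_neg_mul_Ioi (hc : 0 < c.re) :
    c * ∫ t in Ioi (0 : ℝ), (t : ℂ) ^ (m + 1) * Complex.exp (-(c * t)) =
      (m + 1) * ∫ t in Ioi (0 : ℝ), (t : ℂ) ^ m * Complex.exp (-(c * t)) := by
  have hderiv := fun t (_ : t ∈ Ioi (0 : ℝ)) => hasDerivAt_pow_succ_mul_cexp_neg_mul m c t
  have hint := (integrableOn_pow_mul_cexp_neg_mul_Ioi m hc).const_mul (m + 1 : ℂ)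
  have hint' := (integrableOn_pow_mul_cexp_neg_mul_Ioi (m + 1) hc).const_mul c
  have hlim := tendsto_zero_of_hasDerivAt_of_integrableOn_Ioi hderiv (hint.sub hint')
    (integrableOn_pow_mul_cexp_neg_mul_Ioi (m + 1) hc)
  have h := integral_Ioi_of_hasDerivAt_of_tendsto'
    (fun t _ => hasDerivAt_pow_succ_mul_cexp_neg_mul m c t) (hint.sub hint') hlim
  rw [integral_sub hint hint', integral_const_mul, integral_const_mul, Complex.ofReal_zero,
    zero_pow m.succ_ne_zero, zero_mul, sub_zero, sub_eq_zero] at h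
  exact h.symm

lemma integral_pow_mul_cexp_neg_mul_Ioi (hc : 0 < c.re) :
    ∫ t in Ioi (0 : ℝ), (t : ℂ) ^ m * Complex.exp (-(c * t)) =
      m.factorial * (c ^ (m + 1))⁻¹ := by
  have hc0 : c ≠ 0 := by rintro rfl; exact hc.ne' Complex.zero_re
  induction m with
  | zero => simpa [neg_mul] using integral_exp_mul_complex_Ioi (a := -c) (by simpa using hc) 0
  | succ m ih =>
    apply mul_left_cancel₀ hc0
    rw [mul_integral_pow_succ_mul_cexp_neg_mul_Ioi m hc, ih, Nat.factorial_succ]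
    push_cast
    field_simp
    ring

end LaplaceIntegral

/-! ### Lattice sums over a quadrant -/

section QuadrantSum

/-- The Gaussian integers congruent to `1` modulo `1 + i`, in coordinates for which multiplication
by `i` permutes the four quadrants. -/
noncomputable def oddGaussian (a b : ℤ) : ℂ := 1 + a * (1 + I) + b * (1 - I)

/-- The summand of an inverse power sum over the odd Gaussian integers, twisted by `ε = ±1`. -/
noncomputable def oddGaussianTerm (ε : ℂ) (r : ℕ) (x : ℤ × ℤ) : ℂ :=
  ε ^ (x.1 + x.2) * (oddGaussian x.1 x.2 ^ r)⁻¹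

/-- The sum of `oddGaussianTerm` over the quadrant `a, b ≥ 0`. -/
noncomputable def quadrantSum (ε : ℂ) (r : ℕ) : ℂ :=
  ∑' x : ℕ × ℕ, oddGaussianTerm ε r (x.1, x.2)

/-- The two cosets of `{(a, b) | a + b even}` in `ℤ²`, corresponding to the odd Gaussian integers
with odd real part and to those with odd imaginary part. -/
noncomputable def parityEquiv : (ℤ × ℤ) ⊕ (ℤ × ℤ) ≃ ℤ × ℤ :=
  Equiv.ofBijective
    (Sum.elim (fun x => (x.1 + x.2, x.1 - x.2)) fun x => (x.1 + x.2, x.1 - x.2 - 1)) (by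
    constructor
    · rintro (⟨a, b⟩ | ⟨a, b⟩) (⟨c, d⟩ | ⟨c, d⟩) h <;> simp at h ⊢ <;> omega
    · rintro ⟨a, b⟩
      rcases Int.even_or_odd' (a + b) with ⟨k, hk | hk⟩
      · exact ⟨Sum.inl (k, a - k), by simp; omega⟩
      · exact ⟨Sum.inr (k + 1, a - k - 1), by simp; omega⟩)

/-- The plane is the disjoint union of four quadrants, permuted by `(a, b) ↦ (b, -1 - a)`. -/
noncomputable def quadrantEquiv : ((ℕ × ℕ) ⊕ (ℕ × ℕ)) ⊕ ((ℕ × ℕ) ⊕ (ℕ × ℕ)) ≃ ℤ × ℤ :=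
  Equiv.ofBijective
    (Sum.elim (Sum.elim (fun x => ((x.1 : ℤ), (x.2 : ℤ))) fun x => ((x.2 : ℤ), -1 - (x.1 : ℤ)))
      (Sum.elim (fun x => (-1 - (x.1 : ℤ), -1 - (x.2 : ℤ)))
        fun x => (-1 - (x.2 : ℤ), (x.1 : ℤ)))) (by
    constructor
    · rintro ((⟨a, b⟩ | ⟨a, b⟩) | (⟨a, b⟩ | ⟨a, b⟩)) ((⟨c, d⟩ | ⟨c, d⟩) | (⟨c, d⟩ | ⟨c, d⟩)) h <;>
        simp at h ⊢ <;> omega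
    · rintro ⟨a, b⟩
      rcases le_or_gt 0 a with ha | ha <;> rcases le_or_gt 0 b with hb | hb
      · exact ⟨Sum.inl (Sum.inl (a.toNat, b.toNat)), by simp; omega⟩
      · exact ⟨Sum.inl (Sum.inr ((-1 - b).toNat, a.toNat)), by simp; omega⟩
      · exact ⟨Sum.inr (Sum.inr (b.toNat, (-1 - a).toNat)), by simp; omega⟩
      · exact ⟨Sum.inr (Sum.inl ((-1 - a).toNat, (-1 - b).toNat)), by simp; omega⟩)

lemma hasSum_sumInvPow_squareLattice (x : ℂ) {r : ℕ} (hr : 2 < r) :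
    HasSum (fun c : ℤ × ℤ => ((2 * c.1 + 2 * c.2 * I - x : ℂ) ^ r)⁻¹)
      (squareLattice.sumInvPow x r) := by
  have h := squareLattice.latticeEquivProd.symm.toEquiv.hasSum_iff.mpr
    (squareLattice.hasSum_sumInvPow x hr)
  convert h using 2 with c
  have hc : (squareLattice.latticeEquivProd.symm c : ℂ) = 2 * c.1 + 2 * c.2 * I := by
    rw [PeriodPair.latticeEquiv_symm_apply]
    simp only [squareLattice]
    ring
  simp [hc]

variable {ε : ℂ} {r : ℕ}

lemma zpow_two_mul_of_sq_eq_one (hε : ε ^ 2 = 1) (n : ℤ) : ε ^ (2 * n) = 1 := by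
  rw [zpow_mul, zpow_ofNat, hε, one_zpow]

lemma ne_zero_of_sq_eq_one (hε : ε ^ 2 = 1) : ε ≠ 0 :=
  (pow_ne_zero_iff two_ne_zero).mp (hε ▸ one_ne_zero)

lemma inv_eq_self_of_sq_eq_one (hε : ε ^ 2 = 1) : ε⁻¹ = ε :=
  inv_eq_of_mul_eq_one_left (by rw [← sq, hε])

lemma hasSum_oddGaussianTerm (hε : ε ^ 2 = 1) (hr : 2 < r) :
    HasSum (oddGaussianTerm ε r)
      (squareLattice.sumInvPow (-1) r + ε * squareLattice.sumInvPow (-I) r) := by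
  rw [← parityEquiv.hasSum_iff]
  refine HasSum.sum ?_ ?_
  · refine (hasSum_sumInvPow_squareLattice (-1) hr).congr_fun fun c => ?_
    change oddGaussianTerm ε r (c.1 + c.2, c.1 - c.2) = _
    rw [oddGaussianTerm, oddGaussian, show c.1 + c.2 + (c.1 - c.2) = 2 * c.1 by ring,
      zpow_two_mul_of_sq_eq_one hε, one_mul]
    push_cast
    ring_nf
  · refine ((hasSum_sumInvPow_squareLattice (-I) hr).mul_left ε).congr_fun fun c => ?_
    change oddGaussianTerm ε r (c.1 + c.2, c.1 - c.2 - 1) = _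
    rw [oddGaussianTerm, oddGaussian, show c.1 + c.2 + (c.1 - c.2 - 1) = 2 * c.1 + (-1) by ring,
      zpow_add₀ (ne_zero_of_sq_eq_one hε), zpow_two_mul_of_sq_eq_one hε, one_mul, zpow_neg_one,
      inv_eq_self_of_sq_eq_one hε]
    push_cast
    ring_nf

lemma oddGaussian_rotate (a b : ℤ) : oddGaussian b (-1 - a) = I * oddGaussian a b := by
  simp only [oddGaussian]
  push_cast
  linear_combination (-(a : ℂ) + b) * Complex.I_sq

lemma oddGaussianTerm_rotate (hr : I ^ r = ε) (hε : ε ^ 2 = 1) (a b : ℤ) :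
    oddGaussianTerm ε r (b, -1 - a) = oddGaussianTerm ε r (a, b) := by
  have h0 := ne_zero_of_sq_eq_one hε
  simp only [oddGaussianTerm, oddGaussian_rotate, mul_pow, hr, mul_inv]
  rw [show b + (-1 - a) = (a + b) + 2 * (-a) + (-1) by ring, zpow_add₀ h0, zpow_add₀ h0,
    zpow_two_mul_of_sq_eq_one hε, zpow_neg_one, inv_eq_self_of_sq_eq_one hε]
  linear_combination ε ^ (a + b) * (oddGaussian a b ^ r)⁻¹ * hε

lemma summable_oddGaussianTerm (hε : ε ^ 2 = 1) (hr : 2 < r) :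
    Summable fun x : ℕ × ℕ => oddGaussianTerm ε r (x.1, x.2) :=
  (hasSum_oddGaussianTerm hε hr).summable.comp_injective
    (Nat.cast_injective.prodMap Nat.cast_injective)

/-- Fourfold rotational symmetry reduces the full lattice sum to a single quadrant. -/
lemma four_mul_quadrantSum (hε : ε ^ 2 = 1) (hr : 2 < r) (hI : I ^ r = ε) :
    4 * quadrantSum ε r =
      squareLattice.sumInvPow (-1) r + ε * squareLattice.sumInvPow (-I) r := by
  have hquadrant : HasSum (fun x : ℕ × ℕ => oddGaussianTerm ε r (x.1, x.2)) (quadrantSum ε r) :=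
    (summable_oddGaussianTerm hε hr).hasSum
  have hrot (a b : ℤ) := oddGaussianTerm_rotate hI hε a b
  have hplane : HasSum (oddGaussianTerm ε r ∘ quadrantEquiv)
      ((quadrantSum ε r + quadrantSum ε r) + (quadrantSum ε r + quadrantSum ε r)) := by
    refine HasSum.sum (HasSum.sum hquadrant ?_) (HasSum.sum ?_ ?_)
    · exact hquadrant.congr_fun fun x => hrot _ _
    · exact hquadrant.congr_fun fun x => (hrot (x.2 : ℤ) (-1 - (x.1 : ℤ))).trans (hrot _ _)
    · refine hquadrant.congr_fun fun x => ?_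
      have h := hrot (-1 - (x.2 : ℤ)) (x.1 : ℤ)
      rw [sub_sub_cancel] at h
      exact h.symm
  rw [← (quadrantEquiv.hasSum_iff.mp hplane).unique (hasSum_oddGaussianTerm hε hr)]
  ring

end QuadrantSum

/-! ### Moments as quadrant sums -/

section Moment

lemma oddGaussian_re (a b : ℤ) : (oddGaussian a b).re = 1 + a + b := by simp [oddGaussian]

lemma oddGaussian_im (a b : ℤ) : (oddGaussian a b).im = a - b := by
  simp [oddGaussian, sub_eq_add_neg]

lemma oddGaussian_re_pos (x : ℕ × ℕ) : 0 < (oddGaussian x.1 x.2).re := by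
  rw [oddGaussian_re]
  push_cast
  positivity

lemma norm_oddGaussian_le (x : ℕ × ℕ) :
    ‖oddGaussian x.1 x.2‖ ≤ 2 * (oddGaussian x.1 x.2).re := by
  have him : |(oddGaussian x.1 x.2).im| ≤ (oddGaussian x.1 x.2).re := by
    rw [oddGaussian_re, oddGaussian_im, abs_le]
    push_cast
    constructor <;> linarith [x.1.cast_nonneg (α := ℝ), x.2.cast_nonneg (α := ℝ)]
  refine (Complex.norm_le_abs_re_add_abs_im _).trans ?_
  rw [abs_of_pos (oddGaussian_re_pos x), two_mul]
  gcongr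

lemma hasSum_geometric_mul_geometric {u v : ℂ} (hu : ‖u‖ < 1) (hv : ‖v‖ < 1) :
    HasSum (fun x : ℕ × ℕ => u ^ x.1 * v ^ x.2) ((1 - u)⁻¹ * (1 - v)⁻¹) :=
  (hasSum_geometric_of_norm_lt_one hu).mul (hasSum_geometric_of_norm_lt_one hv)
    (summable_mul_of_summable_norm (summable_norm_geometric_of_norm_lt_one hu)
      (summable_norm_geometric_of_norm_lt_one hv))

lemma cexp_neg_oddGaussian_mul (a b : ℕ) (t : ℂ) :
    Complex.exp (-(oddGaussian a b * t)) = Complex.exp (-t) *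
      (Complex.exp (-((1 + I) * t)) ^ a * Complex.exp (-((1 - I) * t)) ^ b) := by
  rw [← Complex.exp_nat_mul, ← Complex.exp_nat_mul, ← Complex.exp_add, ← Complex.exp_add,
    oddGaussian]
  push_cast
  ring_nf

variable {ε : ℂ}

lemma one_sub_mul_cexp_mul_one_sub_mul_cexp (hε : ε ^ 2 = 1) (t : ℂ) :
    (1 - ε * Complex.exp (-((1 + I) * t))) * (1 - ε * Complex.exp (-((1 - I) * t))) =
      Complex.exp (-t) * (2 * (Complex.cosh t - ε * Complex.cos t)) := by
  have hadd : Complex.exp (-((1 + I) * t)) = Complex.exp (-t) * Complex.exp (-t * I) := by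
    rw [← Complex.exp_add]; ring_nf
  have hsub : Complex.exp (-((1 - I) * t)) = Complex.exp (-t) * Complex.exp (t * I) := by
    rw [← Complex.exp_add]; ring_nf
  have hI : Complex.exp (-t * I) * Complex.exp (t * I) = 1 := by
    rw [← Complex.exp_add, neg_mul, neg_add_cancel, Complex.exp_zero]
  have hreal : Complex.exp (-t) * Complex.exp t = 1 := by
    rw [← Complex.exp_add, neg_add_cancel, Complex.exp_zero]
  rw [hadd, hsub, Complex.cosh, Complex.cos]
  linear_combination ε ^ 2 * Complex.exp (-t) ^ 2 * hI + Complex.exp (-t) ^ 2 * hε - hreal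

lemma norm_mul_cexp_neg_lt_one (hε : ε ^ 2 = 1) {c : ℂ} (hc : c.re = 1) {t : ℝ} (ht : 0 < t) :
    ‖ε * Complex.exp (-(c * t))‖ < 1 := by
  rw [norm_mul, Complex.norm_eq_one_of_pow_eq_one hε two_ne_zero, one_mul, Complex.norm_exp]
  simp [hc, ht]

lemma hasSum_zpow_mul_cexp_neg_oddGaussian_mul (hε : ε ^ 2 = 1) {t : ℝ} (ht : 0 < t) :
    HasSum (fun x : ℕ × ℕ => ε ^ ((x.1 : ℤ) + x.2) * Complex.exp (-(oddGaussian x.1 x.2 * t)))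
      (2 * (Complex.cosh t - ε * Complex.cos t))⁻¹ := by
  have hgeom := (hasSum_geometric_mul_geometric
    (norm_mul_cexp_neg_lt_one hε (c := 1 + I) (by simp) ht)
    (norm_mul_cexp_neg_lt_one hε (c := 1 - I) (by simp) ht)).mul_left (Complex.exp (-t))
  rw [← mul_inv, one_sub_mul_cexp_mul_one_sub_mul_cexp hε, mul_inv,
    mul_inv_cancel_left₀ (Complex.exp_ne_zero _)] at hgeom
  refine hgeom.congr_fun fun x => ?_
  rw [cexp_neg_oddGaussian_mul, zpow_add₀ (ne_zero_of_sq_eq_one hε), zpow_natCast, zpow_natCast,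
    mul_pow, mul_pow]
  ring

/-- The moments `∫₀^∞ t^m / (cosh t - ε cos t) dt`, which for `ε = -1` and `ε = 1` are Kuznetsov's
integrals in the lemniscatic case up to the substitution `x = (t / K)²`. -/
noncomputable def coshCosMoment (ε : ℝ) (m : ℕ) : ℝ :=
  ∫ t in Ioi (0 : ℝ), t ^ m / (cosh t - ε * cos t)

lemma summable_inv_re_oddGaussian_pow {r : ℕ} (hr : 2 < r) :
    Summable fun x : ℕ × ℕ => ((oddGaussian x.1 x.2).re ^ r)⁻¹ := by
  refine Summable.of_nonneg_of_le (fun x => ?_) (fun x => ?_)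
    ((summable_oddGaussianTerm (one_pow 2) hr).norm.mul_left (2 ^ r))
  · have := oddGaussian_re_pos x
    positivity
  · have hre := oddGaussian_re_pos x
    have hnorm : 0 < ‖oddGaussian x.1 x.2‖ := hre.trans_le (Complex.re_le_norm _)
    rw [oddGaussianTerm, one_zpow, one_mul, norm_inv, norm_pow, ← div_eq_mul_inv, ← div_pow,
      ← inv_pow]
    refine pow_le_pow_left₀ (by positivity) ?_ _
    rw [inv_eq_one_div, div_le_div_iff₀ hre hnorm, one_mul]
    exact norm_oddGaussian_le x

lemma hasSum_integral_oddGaussian (hε : ε ^ 2 = 1) {m : ℕ} (hm : 2 ≤ m) :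
    HasSum (fun x : ℕ × ℕ => m.factorial * oddGaussianTerm ε (m + 1) (x.1, x.2))
      (∫ t in Ioi (0 : ℝ), (t : ℂ) ^ m * (2 * (Complex.cosh t - ε * Complex.cos t))⁻¹) := by
  have hterm (x : ℕ × ℕ) : ∫ t in Ioi (0 : ℝ), (ε ^ ((x.1 : ℤ) + x.2) *
      ((t : ℂ) ^ m * Complex.exp (-(oddGaussian x.1 x.2 * t)))) =
        m.factorial * oddGaussianTerm ε (m + 1) (x.1, x.2) := by
    rw [integral_const_mul, integral_pow_mul_cexp_neg_mul_Ioi m (oddGaussian_re_pos x),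
      oddGaussianTerm]
    ring
  have hsummable : Summable fun x : ℕ × ℕ => ∫ t in Ioi (0 : ℝ), ‖ε ^ ((x.1 : ℤ) + x.2) *
      ((t : ℂ) ^ m * Complex.exp (-(oddGaussian x.1 x.2 * t)))‖ := by
    simp only [norm_mul (_ ^ (_ : ℤ)), norm_zpow,
      Complex.norm_eq_one_of_pow_eq_one hε two_ne_zero, one_zpow, one_mul,
      integral_norm_pow_mul_cexp_neg_mul_Ioi m (oddGaussian_re_pos _)]
    exact (summable_inv_re_oddGaussian_pow (Nat.lt_succ_of_le hm)).mul_left _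
  have h := hasSum_integral_of_summable_integral_norm (fun x =>
    (integrableOn_pow_mul_cexp_neg_mul_Ioi m (oddGaussian_re_pos x)).const_mul _) hsummable
  simp only [hterm] at h
  convert! h using 1
  refine setIntegral_congr_fun measurableSet_Ioi fun t ht => ?_
  simp only [mul_left_comm _ ((t : ℂ) ^ m), tsum_mul_left,
    (hasSum_zpow_mul_cexp_neg_oddGaussian_mul hε ht).tsum_eq]

lemma coshCosMoment_eq_quadrantSum {ε : ℝ} (hε : ε ^ 2 = 1) {m : ℕ} (hm : 2 ≤ m) :
    (coshCosMoment ε m : ℂ) = 2 * m.factorial * quadrantSum ε (m + 1) := by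
  have hε' : (ε : ℂ) ^ 2 = 1 := by exact_mod_cast hε
  have hsum := ((summable_oddGaussianTerm hε' (Nat.lt_succ_of_le hm)).hasSum.mul_left
    (m.factorial : ℂ)).unique (hasSum_integral_oddGaussian hε' hm)
  rw [quadrantSum, mul_assoc, hsum, coshCosMoment, ← integral_complex_ofReal,
    ← integral_const_mul]
  refine setIntegral_congr_fun measurableSet_Ioi fun t _ => ?_
  push_cast
  field_simp

end Moment

/-! ### Moments as Taylor coefficients -/

section MomentTaylor

open Polynomial

lemma two_mul_coshCosMoment_neg_one {n : ℕ} (hn : n ≠ 0) :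
    2 * (coshCosMoment (-1) (4 * n + 1) : ℂ) =
      (lemniscaticK : ℂ) ^ (4 * n + 2) * ((lemniscateOp ℤ ^ (2 * n)) X).coeff 1 := by
  have hI : I ^ (4 * n + 2) = -1 := by rw [pow_add, pow_mul, Complex.I_pow_four]; simp
  have hsum := four_mul_quadrantSum (by norm_num) (r := 4 * n + 2) (by omega) hI
  rw [lemniscaticK_pow_mul_coeff_one, coshCosMoment_eq_quadrantSum (by norm_num) (by omega),
    coeff_weierstrassPSeries_of_ne_zero _ _ (by omega),
    coeff_weierstrassPSeries_of_ne_zero _ _ (by omega), Nat.factorial_succ]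
  push_cast
  linear_combination (4 * n + 1 : ℂ) * (4 * n).factorial * hsum

lemma two_mul_coshCosMoment_one (n : ℕ) :
    2 * (coshCosMoment 1 (4 * n + 3) : ℂ) =
      (lemniscaticK : ℂ) ^ (4 * n + 4) * ((lemniscateOp ℤ ^ (2 * n + 1)) (X ^ 2)).coeff 0 := by
  have hI : I ^ (4 * n + 4) = 1 := by rw [pow_add, pow_mul, Complex.I_pow_four]; simp
  have hsum := four_mul_quadrantSum (by norm_num) (r := 4 * n + 4) (by omega) hI
  rw [lemniscaticK_pow_mul_coeff_zero, coshCosMoment_eq_quadrantSum (by norm_num) (by omega),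
    coeff_weierstrassPSeries_of_ne_zero _ _ (by omega),
    coeff_weierstrassPSeries_of_ne_zero _ _ (by omega), Nat.factorial_succ]
  push_cast
  linear_combination (4 * n + 3 : ℂ) * (4 * n + 2).factorial * hsum

end MomentTaylor

/-! ### The generating function of the moments -/

section GeneratingFunction

lemma hasSum_cosh_add_cos (y : ℝ) :
    HasSum (fun n : ℕ => 2 * y ^ (4 * n) / (4 * n).factorial) (cosh y + cos y) := by
  have h := (hasSum_cosh y).add (hasSum_cos y)
  rw [← (mul_right_injective₀ two_ne_zero).hasSum_iff] at h
  · refine h.congr_fun fun n => ?_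
    simp only [Function.comp_apply, pow_mul (-1 : ℝ), neg_one_sq, one_pow, one_mul]
    rw [← mul_assoc, show 2 * 2 = 4 by rfl]
    ring
  · intro m hm
    have hodd : Odd m := Nat.not_even_iff_odd.mp fun h => hm (h.two_dvd.imp fun _ => Eq.symm)
    rw [hodd.neg_one_pow]
    ring

lemma two_le_cosh_add_cos (t : ℝ) : 2 ≤ cosh t + cos t := by
  have h := le_hasSum (hasSum_cosh_add_cos t) 0 fun n _ => by
    rw [show 4 * n = 2 * (2 * n) by ring, pow_mul]
    positivity
  simpa using h

lemma cosh_add_cos_pos (t : ℝ) : 0 < cosh t + cos t :=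
  two_pos.trans_le (two_le_cosh_add_cos t)

lemma inv_cosh_add_cos_le (t : ℝ) : (cosh t + cos t)⁻¹ ≤ 3 * exp (-t) := by
  rw [inv_eq_one_div, exp_neg, ← div_eq_mul_inv,
    div_le_div_iff₀ (cosh_add_cos_pos t) (exp_pos t), one_mul]
  linarith [two_le_cosh_add_cos t, neg_one_le_cos t, cosh_eq t, exp_pos (-t)]

lemma integrableOn_pow_div_cosh_add_cos (m : ℕ) :
    IntegrableOn (fun t : ℝ => t ^ m / (cosh t + cos t)) (Ioi 0) := by
  refine ((integrableOn_pow_mul_exp_neg_mul_Ioi m one_pos).const_mul 3).mono'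
    (Continuous.aestronglyMeasurable
      (by fun_prop (disch := exact fun t => (cosh_add_cos_pos t).ne'))) ?_
  filter_upwards [ae_restrict_mem measurableSet_Ioi] with t ht
  have ht' : 0 ≤ t := ht.le
  have := cosh_add_cos_pos t
  rw [norm_of_nonneg (by positivity), one_mul, mul_left_comm, div_eq_mul_inv]
  gcongr
  exact inv_cosh_add_cos_le t

lemma coshCosMoment_neg_one (m : ℕ) :
    coshCosMoment (-1) m = ∫ t in Ioi (0 : ℝ), t ^ m / (cosh t + cos t) := by
  simp only [coshCosMoment, neg_one_mul, sub_neg_eq_add]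

/-- The generating function of the moments `∫₀^∞ t^(4n+1) / (cosh t + cos t) dt`, normalized so that
the moment of exponent `4n + 1` has the coefficient `2 x^(4n) / (4n)!`. -/
noncomputable def momentGeneratingIntegral (x : ℝ) : ℝ :=
  ∫ t in Ioi (0 : ℝ), t * (cosh (t * x) + cos (t * x)) / (cosh t + cos t)

variable {x t : ℝ}

lemma hasSum_momentGeneratingIntegrand (x t : ℝ) :
    HasSum (fun n : ℕ => 2 * x ^ (4 * n) / (4 * n).factorial *
        (t ^ (4 * n + 1) / (cosh t + cos t)))
      (t * (cosh (t * x) + cos (t * x)) / (cosh t + cos t)) := by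
  rw [mul_div_right_comm]
  refine ((hasSum_cosh_add_cos (t * x)).mul_left (t / (cosh t + cos t))).congr_fun fun n => ?_
  rw [mul_pow]
  ring

lemma hasSum_momentGeneratingIntegral
    (h : Summable fun n : ℕ =>
      2 * x ^ (4 * n) / (4 * n).factorial * coshCosMoment (-1) (4 * n + 1)) :
    HasSum (fun n : ℕ => 2 * x ^ (4 * n) / (4 * n).factorial * coshCosMoment (-1) (4 * n + 1))
      (momentGeneratingIntegral x) := by
  have hint (n : ℕ) := (integrableOn_pow_div_cosh_add_cos (4 * n + 1)).const_mul
    (2 * x ^ (4 * n) / (4 * n).factorial)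
  have hnorm (n : ℕ) : ∫ t in Ioi (0 : ℝ), ‖2 * x ^ (4 * n) / (4 * n).factorial *
      (t ^ (4 * n + 1) / (cosh t + cos t))‖ =
        2 * x ^ (4 * n) / (4 * n).factorial * coshCosMoment (-1) (4 * n + 1) := by
    rw [coshCosMoment_neg_one, ← integral_const_mul]
    refine setIntegral_congr_fun measurableSet_Ioi fun t ht => norm_of_nonneg ?_
    have ht' : 0 ≤ t := ht.le
    have hx : 0 ≤ x ^ (4 * n) := by
      rw [show 4 * n = 2 * (2 * n) by ring, pow_mul]
      positivity
    have := cosh_add_cos_pos t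
    positivity
  have hsum := hasSum_integral_of_summable_integral_norm hint (by simpa only [hnorm] using h)
  simp only [integral_const_mul, ← coshCosMoment_neg_one,
    (hasSum_momentGeneratingIntegrand x _).tsum_eq] at hsum
  exact hsum

/-- The difference of the integrands of `momentGeneratingIntegral x` and of
`∫₀^∞ t exp(-(1 - x) t) dt = 1 / (1 - x)²`. -/
noncomputable def momentGeneratingRemainder (x t : ℝ) : ℝ :=
  t * (cosh (t * x) + cos (t * x)) / (cosh t + cos t) - t * exp (-((1 - x) * t))

lemma momentGeneratingRemainder_eq (x t : ℝ) :
    momentGeneratingRemainder x t = t * (cosh (t * x) + cos (t * x) -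
      exp (-((1 - x) * t)) * (cosh t + cos t)) * (cosh t + cos t)⁻¹ := by
  have := (cosh_add_cos_pos t).ne'
  rw [momentGeneratingRemainder]
  field_simp

/-- The leading exponentials `exp (t x) / 2` cancel. -/
lemma cosh_add_cos_sub_exp_mul (x t : ℝ) :
    cosh (t * x) + cos (t * x) - exp (-((1 - x) * t)) * (cosh t + cos t) =
      exp (-(t * x)) / 2 + cos (t * x) - exp (t * x - 2 * t) / 2 -
        exp (-((1 - x) * t)) * cos t := by
  have hadd : exp (-((1 - x) * t)) * exp t = exp (t * x) := by rw [← exp_add]; ring_nf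
  have hsub : exp (-((1 - x) * t)) * exp (-t) = exp (t * x - 2 * t) := by
    rw [← exp_add]; ring_nf
  rw [cosh_eq t, cosh_eq (t * x)]
  linear_combination (-1 / 2 : ℝ) * hadd - (1 / 2 : ℝ) * hsub

lemma abs_cosh_add_cos_sub_exp_mul_le (hx : x ∈ Icc (0 : ℝ) 1) (ht : 0 ≤ t) :
    |cosh (t * x) + cos (t * x) - exp (-((1 - x) * t)) * (cosh t + cos t)| ≤ 3 := by
  have hexp₁ : exp (-(t * x)) ≤ 1 := exp_le_one_iff.mpr (by nlinarith [hx.1])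
  have hexp₂ : exp (t * x - 2 * t) ≤ 1 := exp_le_one_iff.mpr (by nlinarith [hx.2])
  have hexp₃ : |exp (-((1 - x) * t)) * cos t| ≤ 1 := by
    rw [abs_mul, abs_of_pos (exp_pos _)]
    exact mul_le_one₀ (exp_le_one_iff.mpr (by nlinarith [hx.2])) (abs_nonneg _) (abs_cos_le_one t)
  rw [cosh_add_cos_sub_exp_mul, abs_le]
  constructor <;> linarith [(abs_le.mp hexp₃).1, (abs_le.mp hexp₃).2, exp_pos (-(t * x)),
    exp_pos (t * x - 2 * t), neg_one_le_cos (t * x), cos_le_one (t * x)]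

lemma norm_momentGeneratingRemainder_le (hx : x ∈ Icc (0 : ℝ) 1) (ht : 0 ≤ t) :
    ‖momentGeneratingRemainder x t‖ ≤ 9 * (t ^ 1 * exp (-(1 * t))) := by
  have := cosh_add_cos_pos t
  rw [momentGeneratingRemainder_eq, norm_mul, norm_mul, norm_of_nonneg ht, norm_inv,
    norm_of_nonneg this.le, norm_eq_abs, pow_one, one_mul]
  calc t * |cosh (t * x) + cos (t * x) - exp (-((1 - x) * t)) * (cosh t + cos t)| *
        (cosh t + cos t)⁻¹
      ≤ t * 3 * (3 * exp (-t)) := by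
        gcongr
        exacts [abs_cosh_add_cos_sub_exp_mul_le hx ht, inv_cosh_add_cos_le t]
    _ = 9 * (t * exp (-t)) := by ring

lemma ae_norm_momentGeneratingRemainder_le (hx : x ∈ Icc (0 : ℝ) 1) :
    ∀ᵐ t ∂volume.restrict (Ioi (0 : ℝ)),
      ‖momentGeneratingRemainder x t‖ ≤ 9 * (t ^ 1 * exp (-(1 * t))) := by
  filter_upwards [ae_restrict_mem measurableSet_Ioi] with t ht
    using norm_momentGeneratingRemainder_le hx ht.le

lemma continuous_momentGeneratingRemainder (x : ℝ) : Continuous (momentGeneratingRemainder x) := by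
  unfold momentGeneratingRemainder
  fun_prop (disch := exact fun t => (cosh_add_cos_pos t).ne')

lemma momentGeneratingIntegral_sub_inv_sq (hx : x ∈ Ico (0 : ℝ) 1) :
    momentGeneratingIntegral x - 1 / (1 - x) ^ 2 =
      ∫ t in Ioi (0 : ℝ), momentGeneratingRemainder x t := by
  have hx' : 0 < 1 - x := sub_pos.mpr hx.2
  have hrem : IntegrableOn (momentGeneratingRemainder x) (Ioi 0) :=
    ((integrableOn_pow_mul_exp_neg_mul_Ioi 1 one_pos).const_mul 9).mono'
      (continuous_momentGeneratingRemainder x).aestronglyMeasurable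
      (ae_norm_momentGeneratingRemainder_le ⟨hx.1, hx.2.le⟩)
  have hexp := integrableOn_pow_mul_exp_neg_mul_Ioi 1 hx'
  have hadd := integral_add hrem hexp
  rw [integral_pow_mul_exp_neg_mul_Ioi 1 hx'] at hadd
  simp only [momentGeneratingRemainder, pow_one, sub_add_cancel, Nat.factorial_one, Nat.cast_one,
    one_mul, Nat.reduceAdd] at hadd
  rw [momentGeneratingIntegral, hadd, one_div, add_sub_cancel_right]
  rfl

lemma tendsto_momentGeneratingIntegral_sub_inv_sq :
    Tendsto (fun x => momentGeneratingIntegral x - 1 / (1 - x) ^ 2) (𝓝[<] 1) (𝓝 0) := by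
  have hmem : ∀ᶠ x : ℝ in 𝓝[<] 1, x ∈ Ico (0 : ℝ) 1 := Ico_mem_nhdsLT one_pos
  have hlim (t : ℝ) : Tendsto (fun x => momentGeneratingRemainder x t) (𝓝[<] 1) (𝓝 0) := by
    have hcont : Continuous fun x => momentGeneratingRemainder x t := by
      unfold momentGeneratingRemainder
      fun_prop
    have hone : momentGeneratingRemainder 1 t = 0 := by simp [momentGeneratingRemainder_eq]
    exact hone ▸ (hcont.tendsto 1).mono_left nhdsWithin_le_nhds
  have h := tendsto_integral_filter_of_dominated_convergence
    (μ := volume.restrict (Ioi (0 : ℝ))) (F := momentGeneratingRemainder) _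
    (Eventually.of_forall fun x => (continuous_momentGeneratingRemainder x).aestronglyMeasurable)
    (hmem.mono fun x hx => ae_norm_momentGeneratingRemainder_le ⟨hx.1, hx.2.le⟩)
    ((integrableOn_pow_mul_exp_neg_mul_Ioi 1 one_pos).const_mul 9)
    (Eventually.of_forall hlim)
  rw [integral_zero] at h
  exact h.congr' (hmem.mono fun x hx => (momentGeneratingIntegral_sub_inv_sq hx).symm)

end GeneratingFunction

/-! ### The first moment -/

section FirstMoment

lemma one_le_norm_sub_neg_one (l : squareLattice.lattice) : 1 ≤ ‖(l : ℂ) - -1‖ := by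
  obtain ⟨a, b, h⟩ := mem_squareLattice.mp l.2
  refine le_trans ?_ (Complex.abs_re_le_norm _)
  have hre : ((l : ℂ) - -1).re = ((2 * a + 1 : ℤ) : ℝ) := by simp [h]
  rw [hre]
  exact_mod_cast Int.one_le_abs (show 2 * a + 1 ≠ 0 by omega)

lemma one_le_norm_sub_neg_I (l : squareLattice.lattice) : 1 ≤ ‖(l : ℂ) - -I‖ := by
  obtain ⟨a, b, h⟩ := mem_squareLattice.mp l.2
  refine le_trans ?_ (Complex.abs_im_le_norm _)
  have him : ((l : ℂ) - -I).im = ((2 * b + 1 : ℤ) : ℝ) := by simp [h]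
  rw [him]
  exact_mod_cast Int.one_le_abs (show 2 * b + 1 ≠ 0 by omega)

variable {x : ℝ}

lemma hasSum_weierstrassP_ofReal_sub {L : PeriodPair} {a : ℂ}
    (ha : ∀ l : L.lattice, 1 ≤ ‖(l : ℂ) - -a‖) (hx : x ∈ Ioo (-1 : ℝ) 1) :
    HasSum (fun j => (L.weierstrassPSeries (-a)).coeff j * (x : ℂ) ^ j) (℘[L] (x - a)) := by
  simpa using L.weierstrassPSeries_hasSum (x - a) (-a) fun l => by
    rw [sub_neg_eq_add, sub_add_cancel, Complex.norm_real]
    exact (abs_lt.mpr hx).trans_le (ha l)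

lemma coeff_weierstrassPSeries_squareLattice_of_not_four_dvd {j : ℕ} (hj : ¬ 4 ∣ j) :
    (squareLattice.weierstrassPSeries (-1)).coeff j =
      (squareLattice.weierstrassPSeries (-I)).coeff j := by
  have hj₀ : j ≠ 0 := fun h => hj (h ▸ dvd_zero 4)
  have hsum : squareLattice.sumInvPow (-1) (j + 2) = squareLattice.sumInvPow (-I) (j + 2) := by
    rcases Nat.even_or_odd j with heven | hodd
    · obtain ⟨k, rfl⟩ : ∃ k, j = 4 * k + 2 := ⟨j / 4, by obtain ⟨m, rfl⟩ := heven; omega⟩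
      have hI : I ^ (4 * k + 2 + 2) = 1 := by rw [add_assoc, pow_add, pow_mul]; simp
      rw [← mul_neg_one I, sumInvPow_squareLattice_I_mul, hI, inv_one, one_mul]
    · have hodd' : Odd (j + 2) := hodd.add_even even_two
      rw [sumInvPow_eq_zero_of_odd (by simpa using two_mem_squareLattice) hodd',
        sumInvPow_eq_zero_of_odd (by simpa using two_mul_I_mem_squareLattice) hodd']
  rw [coeff_weierstrassPSeries_of_ne_zero _ _ hj₀, coeff_weierstrassPSeries_of_ne_zero _ _ hj₀,
    hsum]

lemma hasSum_weierstrassP_sub_one_sub_sub_I (hx : x ∈ Ioo (-1 : ℝ) 1) :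
    HasSum (fun n => ((squareLattice.weierstrassPSeries (-1)).coeff (4 * n) -
        (squareLattice.weierstrassPSeries (-I)).coeff (4 * n)) * (x : ℂ) ^ (4 * n))
      (℘[squareLattice] (x - 1) - ℘[squareLattice] (x - I)) := by
  have h := (hasSum_weierstrassP_ofReal_sub one_le_norm_sub_neg_one hx).sub
    (hasSum_weierstrassP_ofReal_sub one_le_norm_sub_neg_I hx)
  simp only [← sub_mul] at h
  rw [← (mul_right_injective₀ (four_ne_zero (α := ℕ))).hasSum_iff fun j hj => by
    rw [coeff_weierstrassPSeries_squareLattice_of_not_four_dvd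
      fun hdvd => hj (hdvd.imp fun _ => Eq.symm), sub_self, zero_mul]] at h
  exact h

lemma momentGeneratingIntegral_coeff_eq (n : ℕ) :
    2 / ((4 * n).factorial : ℂ) * coshCosMoment (-1) (4 * n + 1) =
      (if n = 0 then 2 * coshCosMoment (-1) 1 - (lemniscaticK : ℂ) ^ 2 else 0) +
        ((squareLattice.weierstrassPSeries (-1)).coeff (4 * n) -
          (squareLattice.weierstrassPSeries (-I)).coeff (4 * n)) := by
  rcases eq_or_ne n 0 with rfl | hn
  · have h := lemniscaticK_pow_mul_coeff_one 0
    simp only [mul_zero, zero_add, pow_zero, Module.End.one_apply, Polynomial.coeff_X_one,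
      Int.cast_one, mul_one, Nat.factorial_zero, Nat.cast_one, one_mul] at h
    simp [← h]
  · have h := two_mul_coshCosMoment_neg_one hn
    rw [lemniscaticK_pow_mul_coeff_one] at h
    rw [if_neg hn, zero_add, div_mul_eq_mul_div, h,
      mul_div_cancel_left₀ _ (Nat.cast_ne_zero.mpr (4 * n).factorial_ne_zero)]

/-- Only the constant Taylor coefficients of the two sides are not yet known to agree. -/
lemma momentGeneratingIntegral_eq (hx : x ∈ Ioo (-1 : ℝ) 1) :
    (momentGeneratingIntegral x : ℂ) = 2 * coshCosMoment (-1) 1 - lemniscaticK ^ 2 +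
      (℘[squareLattice] (x - 1) - ℘[squareLattice] (x - I)) := by
  have hsum : HasSum (fun n : ℕ => ((2 * x ^ (4 * n) / (4 * n).factorial *
        coshCosMoment (-1) (4 * n + 1) : ℝ) : ℂ))
      (2 * coshCosMoment (-1) 1 - lemniscaticK ^ 2 +
        (℘[squareLattice] (x - 1) - ℘[squareLattice] (x - I))) := by
    refine ((hasSum_ite_eq 0 (2 * coshCosMoment (-1) 1 - (lemniscaticK : ℂ) ^ 2)).add
      (hasSum_weierstrassP_sub_one_sub_sub_I hx)).congr_fun fun n => ?_
    push_cast
    rw [mul_div_right_comm, mul_right_comm, momentGeneratingIntegral_coeff_eq]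
    split_ifs with hn <;> simp [hn]
  exact (Complex.hasSum_ofReal.mpr (hasSum_momentGeneratingIntegral
    (Complex.summable_ofReal.mp hsum.summable))).unique hsum

lemma weierstrassP_squareLattice_one_sub_I : ℘[squareLattice] (1 - I) = 0 := by
  have h := squareLattice.weierstrassP_add_coe (1 - I) ⟨2 * I, two_mul_I_mem_squareLattice⟩
  have hrot : 1 - I + 2 * I = I * (1 - I) := by linear_combination Complex.I_sq
  rw [hrot, weierstrassP_squareLattice_I_mul] at h
  exact neg_eq_self.mp h

lemma tendsto_weierstrassP_ofReal_sub_I :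
    Tendsto (fun x : ℝ => ℘[squareLattice] (x - I)) (𝓝[<] 1) (𝓝 0) := by
  have h := (continuousAt_weierstrassP_ofReal_sub (ofReal_sub_I_notMem_squareLattice 1)).tendsto
  rw [Complex.ofReal_one, weierstrassP_squareLattice_one_sub_I] at h
  exact h.mono_left nhdsWithin_le_nhds

/-- The quadrant sum for this moment does not converge absolutely; its value is read off from the
behaviour of the generating function at the pole `x = 1`. -/
lemma two_mul_coshCosMoment_neg_one_one : 2 * coshCosMoment (-1) 1 = lemniscaticK ^ 2 := by
  have hpole := (tendsto_weierstrassP_sub_inv_sq squareLattice).comp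
    (tendsto_ofReal_sub_one.mono_right nhdsWithin_le_nhds)
  have hgen :=
    (Complex.continuous_ofReal.tendsto 0).comp tendsto_momentGeneratingIntegral_sub_inv_sq
  have hconst : Tendsto (fun _ : ℝ => (2 * coshCosMoment (-1) 1 - lemniscaticK ^ 2 : ℂ)) (𝓝[<] 1)
      (𝓝 (((0 : ℝ) : ℂ) - (0 - 0))) := by
    refine (hgen.sub (hpole.sub tendsto_weierstrassP_ofReal_sub_I)).congr' ?_
    filter_upwards [Ioo_mem_nhdsLT (neg_lt_self one_pos)] with x hx
    simp only [Function.comp_apply]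
    push_cast
    rw [momentGeneratingIntegral_eq hx, sub_sq_comm 1]
    ring
  have h := tendsto_nhds_unique tendsto_const_nhds hconst
  rw [Complex.ofReal_zero, sub_zero, sub_zero, sub_eq_zero] at h
  exact_mod_cast h

end FirstMoment

/-! ### Kuznetsov's integrals -/

section Kuznetsov

lemma pow_mul_integral_pow_div_comp_sqrt (D : ℝ → ℝ) (n : ℕ) {c : ℝ} (hc : 0 < c) :
    c ^ (2 * n + 2) * ∫ x in Ioi (0 : ℝ), x ^ n / D (c * √x) =
      2 * ∫ t in Ioi (0 : ℝ), t ^ (2 * n + 1) / D t := by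
  have hsq := integral_comp_rpow_Ioi (fun x : ℝ => x ^ n / D (c * √x)) (p := 2) two_ne_zero
  have hscale := integral_comp_mul_left_Ioi (fun s : ℝ => s ^ (2 * n + 1) / D s) 0 hc
  rw [mul_zero, smul_eq_mul] at hscale
  have hcongr : ∀ t ∈ Ioi (0 : ℝ), (|(2 : ℝ)| * t ^ ((2 : ℝ) - 1)) • ((t ^ (2 : ℝ)) ^ n /
      D (c * √(t ^ (2 : ℝ)))) = 2 / c ^ (2 * n + 1) * ((c * t) ^ (2 * n + 1) / D (c * t)) := by
    intro t ht
    rw [rpow_two, show (2 : ℝ) - 1 = 1 by norm_num, rpow_one, sqrt_sq (mem_Ioi.mp ht).le,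
      abs_of_pos two_pos, smul_eq_mul, mul_pow]
    field_simp
    ring
  rw [← hsq, setIntegral_congr_fun measurableSet_Ioi hcongr, integral_const_mul, hscale]
  field_simp
  ring

open Polynomial

lemma Iplus_two_mul (n : ℕ) :
    Iplus (1 / √2) (2 * n) = (((lemniscateOp ℤ ^ (2 * n)) X).coeff 1 : ℤ) := by
  have hmoment : 2 * coshCosMoment (-1) (4 * n + 1) =
      lemniscaticK ^ (4 * n + 2) * (((lemniscateOp ℤ ^ (2 * n)) X).coeff 1 : ℤ) := by
    rcases eq_or_ne n 0 with rfl | hn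
    · simpa using two_mul_coshCosMoment_neg_one_one
    · exact_mod_cast two_mul_coshCosMoment_neg_one hn
  have hsubst := pow_mul_integral_pow_div_comp_sqrt (fun t => cosh t + cos t) (2 * n)
    lemniscaticK_pos
  rw [← mul_assoc, show 2 * 2 = 4 by rfl, ← coshCosMoment_neg_one, hmoment] at hsubst
  have hint := mul_left_cancel₀ (pow_pos lemniscaticK_pos _).ne' hsubst
  simp only [Iplus, lemniscatic_complementary_modulus, add_comm (cos _), even_two_mul,
    Even.neg_pow, one_pow, hint]
  ring

lemma Iminus_two_mul (n : ℕ) :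
    Iminus (1 / √2) (2 * n) = (-2 * ((lemniscateOp ℤ ^ (2 * n + 1)) (X ^ 2)).coeff 0 : ℤ) := by
  have hmoment : 2 * ∫ t in Ioi (0 : ℝ), t ^ (4 * n + 3) / (cosh t - cos t) =
      lemniscaticK ^ (4 * n + 4) * (((lemniscateOp ℤ ^ (2 * n + 1)) (X ^ 2)).coeff 0 : ℤ) := by
    have h := two_mul_coshCosMoment_one n
    simp only [coshCosMoment, one_mul] at h
    exact_mod_cast h
  have hsubst := pow_mul_integral_pow_div_comp_sqrt (fun t => cosh t - cos t) (2 * n + 1)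
    lemniscaticK_pos
  rw [show 2 * (2 * n + 1) + 1 = 4 * n + 3 by ring, hmoment,
    show 2 * (2 * n + 1) + 2 = 4 * n + 4 by ring] at hsubst
  have hint := mul_left_cancel₀ (pow_pos lemniscaticK_pos _).ne' hsubst
  have hneg (x : ℝ) : x ^ (2 * n + 1) / (cos (lemniscaticK * √x) - cosh (lemniscaticK * √x)) =
      -(x ^ (2 * n + 1) / (cosh (lemniscaticK * √x) - cos (lemniscaticK * √x))) := by
    rw [← neg_sub, div_neg]
  simp only [Iminus, lemniscatic_complementary_modulus, hneg, integral_neg, hint,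
    Odd.neg_one_pow ⟨n, rfl⟩]
  push_cast
  ring

end Kuznetsov

theorem lemniscatic_mod_ten (n : ℕ) :
    (∃ a : ℤ, Iplus (1 / Real.sqrt 2) (2 * n) = (a : ℝ) ∧ a ≡ 2 ^ n [ZMOD 10]) ∧
    (∃ b : ℤ, Iminus (1 / Real.sqrt 2) (2 * n) = (b : ℝ) ∧ b ≡ 6 * 2 ^ n [ZMOD 10]) :=
  ⟨⟨_, Iplus_two_mul n, coeff_one_lemniscateOp_pow_X n⟩,
    ⟨_, Iminus_two_mul n, coeff_zero_lemniscateOp_pow_X_sq n⟩⟩
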